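/- Assume (H4.1) and (H4.2). If u₁ ∈ Θ and u₂ ∈ Θ are both viscosity solutions of the Isaacs equation ∂_t w(t,x) + H⁻(t, x, w, Dw, D²w) = 0 on [0,T)×ℝⁿ with terminal condition w(T,x) = Φ(x), then u₁(t,x) = u₂(t,x) for all (t,x) ∈ [0,T]×ℝⁿ. -/

import Mathlib

noncomputable section

open scoped RealInnerProductSpace Matrix

attribute [local instance] Matrix.frobeniusNormedAddCommGroup

/-- The Euclidean state space `ℝⁿ`. -/
abbrev Eucl (n : ℕ) := EuclideanSpace ℝ (Fin n)

/-- Time derivative `∂φ/∂t (t,x)` of a function `φ : ℝ × ℝⁿ → ℝ`. -/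
def timeDeriv {n : ℕ} (φ : ℝ → Eucl n → ℝ) (t : ℝ) (x : Eucl n) : ℝ :=
  deriv (fun s => φ s x) t

/-- Spatial gradient `Dφ(t,x) ∈ ℝⁿ`. -/
def spaceGrad {n : ℕ} (φ : ℝ → Eucl n → ℝ) (t : ℝ) (x : Eucl n) : Eucl n :=
  gradient (fun y => φ t y) x

/-- Spatial Hessian `D²φ(t,x)` as an `n × n` matrix. -/
def spaceHess {n : ℕ} (φ : ℝ → Eucl n → ℝ) (t : ℝ) (x : Eucl n) :
    Matrix (Fin n) (Fin n) ℝ :=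
  Matrix.of fun i j =>
    fderiv ℝ (fun y => fderiv ℝ (fun y' => φ t y') y (EuclideanSpace.single j (1 : ℝ))) x
      (EuclideanSpace.single i (1 : ℝ))

/-- The row vector `pᵀσ ∈ ℝᵈ`. -/
def rowMul {n d : ℕ} (p : Eucl n) (M : Matrix (Fin n) (Fin d) ℝ) : Eucl d :=
  (WithLp.equiv 2 (Fin d → ℝ)).symm fun j => ∑ i, p i * M i j

/-- `φ ∈ C³_{l,b}([0,T]×ℝⁿ)`: three times continuously differentiable with all
derivatives of order 1 to 3 bounded. -/
def IsTestFunction {n : ℕ} (φ : ℝ → Eucl n → ℝ) : Prop :=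
  ContDiff ℝ 3 (fun p : ℝ × Eucl n => φ p.1 p.2) ∧
  ∀ i : ℕ, 1 ≤ i → i ≤ 3 →
    ∃ M : ℝ, ∀ p : ℝ × Eucl n,
      ‖iteratedFDeriv ℝ i (fun q : ℝ × Eucl n => φ q.1 q.2) p‖ ≤ M

/-- Viscosity subsolution of `∂_t w + G(t,x,w,Dw,D²w) = 0` on `[0,T)×ℝⁿ`
with terminal condition `w(T,·) = g`. -/
def IsViscositySubsolution {n : ℕ} (T : ℝ)
    (G : ℝ → Eucl n → ℝ → Eucl n → Matrix (Fin n) (Fin n) ℝ → ℝ)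
    (g : Eucl n → ℝ) (w : ℝ → Eucl n → ℝ) : Prop :=
  (∀ x : Eucl n, w T x ≤ g x) ∧
  ∀ φ : ℝ → Eucl n → ℝ, IsTestFunction φ →
    ∀ t ∈ Set.Ico (0 : ℝ) T, ∀ x : Eucl n,
      IsLocalMaxOn (fun p : ℝ × Eucl n => w p.1 p.2 - φ p.1 p.2)
        (Set.Icc (0 : ℝ) T ×ˢ (Set.univ : Set (Eucl n))) (t, x) →
      0 ≤ timeDeriv φ t x + G t x (φ t x) (spaceGrad φ t x) (spaceHess φ t x)

/-- Viscosity supersolution of `∂_t w + G(t,x,w,Dw,D²w) = 0` on `[0,T)×ℝⁿ`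
with terminal condition `w(T,·) = g`. -/
def IsViscositySupersolution {n : ℕ} (T : ℝ)
    (G : ℝ → Eucl n → ℝ → Eucl n → Matrix (Fin n) (Fin n) ℝ → ℝ)
    (g : Eucl n → ℝ) (w : ℝ → Eucl n → ℝ) : Prop :=
  (∀ x : Eucl n, g x ≤ w T x) ∧
  ∀ φ : ℝ → Eucl n → ℝ, IsTestFunction φ →
    ∀ t ∈ Set.Ico (0 : ℝ) T, ∀ x : Eucl n,
      IsLocalMinOn (fun p : ℝ × Eucl n => w p.1 p.2 - φ p.1 p.2)
        (Set.Icc (0 : ℝ) T ×ˢ (Set.univ : Set (Eucl n))) (t, x) →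
      timeDeriv φ t x + G t x (φ t x) (spaceGrad φ t x) (spaceHess φ t x) ≤ 0

/-- Viscosity solution: both a sub- and a supersolution. -/
def IsViscositySolution {n : ℕ} (T : ℝ)
    (G : ℝ → Eucl n → ℝ → Eucl n → Matrix (Fin n) (Fin n) ℝ → ℝ)
    (g : Eucl n → ℝ) (w : ℝ → Eucl n → ℝ) : Prop :=
  IsViscositySubsolution T G g w ∧ IsViscositySupersolution T G g w

/-- The lower Hamiltonian `H⁻`. -/
def lowerHamiltonian {n d : ℕ} {U V : Type*}
    (b : ℝ → Eucl n → U → V → Eucl n)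
    (σ : ℝ → Eucl n → U → V → Matrix (Fin n) (Fin d) ℝ)
    (f : ℝ → Eucl n → ℝ → Eucl d → U → V → ℝ)
    (t : ℝ) (x : Eucl n) (y : ℝ) (p : Eucl n) (X : Matrix (Fin n) (Fin n) ℝ) : ℝ :=
  ⨆ u : U, ⨅ v : V,
    (1 / 2) * Matrix.trace (σ t x u v * (σ t x u v)ᵀ * X)
      + ⟪p, b t x u v⟫
      + f t x y (rowMul p (σ t x u v)) u v

/-- The upper Hamiltonian `H⁺`. -/
def upperHamiltonian {n d : ℕ} {U V : Type*}
    (b : ℝ → Eucl n → U → V → Eucl n)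
    (σ : ℝ → Eucl n → U → V → Matrix (Fin n) (Fin d) ℝ)
    (f : ℝ → Eucl n → ℝ → Eucl d → U → V → ℝ)
    (t : ℝ) (x : Eucl n) (y : ℝ) (p : Eucl n) (X : Matrix (Fin n) (Fin n) ℝ) : ℝ :=
  ⨅ v : V, ⨆ u : U,
    (1 / 2) * Matrix.trace (σ t x u v * (σ t x u v)ᵀ * X)
      + ⟪p, b t x u v⟫
      + f t x y (rowMul p (σ t x u v)) u v

/-- Membership in the class `Θ` of continuous functions on `[0,T]×ℝⁿ` satisfying the
growth condition `φ(t,x)·exp{−Ã[log((|x|²+1)^{1/2})]²} → 0` as `|x| → ∞`,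
uniformly in `t ∈ [0,T]`. -/
def MemTheta {n : ℕ} (T : ℝ) (φ : ℝ → Eucl n → ℝ) : Prop :=
  ContinuousOn (fun p : ℝ × Eucl n => φ p.1 p.2)
      (Set.Icc (0 : ℝ) T ×ˢ (Set.univ : Set (Eucl n))) ∧
  ∃ A : ℝ, 0 < A ∧ ∀ ε > (0 : ℝ), ∃ R : ℝ, ∀ t ∈ Set.Icc (0 : ℝ) T, ∀ x : Eucl n,
    R ≤ ‖x‖ →
      |φ t x| * Real.exp (-A * (Real.log ((‖x‖ ^ 2 + 1) ^ ((1 : ℝ) / 2))) ^ 2) ≤ ε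

section ConvexContact

open Filter Topology MeasureTheory Asymptotics

variable {F : Type*} [NormedAddCommGroup F] [InnerProductSpace ℝ F]

/-- `a` is a (global) subgradient of `C` at `x`. -/
def IsSubgradient (C : F → ℝ) (x a : F) : Prop :=
  ∀ x', C x + ⟪a, x' - x⟫ ≤ C x'

lemma IsSubgradient.monotone {C : F → ℝ} {x a x' a' : F}
    (h : IsSubgradient C x a) (h' : IsSubgradient C x' a') : 0 ≤ ⟪a' - a, x' - x⟫ := by
  have h1 := h x'
  have h2 := h' x
  have h3 : ⟪a', x - x'⟫ = - ⟪a', x' - x⟫ := by rw [← inner_neg_right, neg_sub]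
  rw [inner_sub_left]
  linarith

/-- A vector whose pairing with `h` is `O(‖h‖²)` from above vanishes. -/
lemma eq_zero_of_inner_le_sq {c : F} {K : ℝ} (h : ∀ k : F, ⟪c, k⟫ ≤ K * ‖k‖ ^ 2) : c = 0 := by
  by_contra hc
  have hc' : 0 < ‖c‖ := norm_pos_iff.mpr hc
  set s : ℝ := 1 / (2 * (|K| + 1)) with hs
  have hK : 0 < |K| + 1 := by positivity
  have hs0 : 0 < s := by positivity
  have h1 := h (s • c)
  rw [inner_smul_right, real_inner_self_eq_norm_sq, norm_smul, Real.norm_of_nonneg hs0.le] at h1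
  have h2 : s * ‖c‖ ^ 2 * (1 - K * s) ≤ 0 := by nlinarith
  have h3 : K * s ≤ 1 / 2 := by
    have : K ≤ |K| + 1 := by linarith [le_abs_self K]
    calc K * s ≤ (|K| + 1) * s := by gcongr
      _ = 1 / 2 := by rw [hs]; field_simp
  have : 0 < s * ‖c‖ ^ 2 * (1 - K * s) := by
    apply mul_pos (by positivity); linarith
  linarith

/-- A function touched from above by a quadratic at a point has only one subgradient there. -/
lemma IsSubgradient.eq_of_contact {C : F → ℝ} {x a b : F} {L : F →L[ℝ] F}
    (hb : IsSubgradient C x b)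
    (h : ∀ k, C (x + k) ≤ C x + ⟪a, k⟫ + ⟪L k, k⟫ / 2) : b = a := by
  rw [← sub_eq_zero]
  apply eq_zero_of_inner_le_sq (K := ‖L‖ / 2)
  intro k
  have h1 := hb (x + k)
  rw [add_sub_cancel_left] at h1
  have h2 := h k
  have h3 : ⟪L k, k⟫ ≤ ‖L‖ * ‖k‖ ^ 2 := by
    calc ⟪L k, k⟫ ≤ ‖L k‖ * ‖k‖ := real_inner_le_norm _ _
      _ ≤ ‖L‖ * ‖k‖ * ‖k‖ := by gcongr; exact L.le_opNorm k
      _ = _ := by ring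
  rw [inner_sub_left]
  linarith

/-- Subgradients near a contact point stay close to the contact gradient. -/
lemma IsSubgradient.norm_sub_le_of_contact {C : F → ℝ} {x a x' a' : F} {L : F →L[ℝ] F}
    (ha : IsSubgradient C x a) (ha' : IsSubgradient C x' a')
    (h : ∀ k, C (x + k) ≤ C x + ⟪a, k⟫ + ⟪L k, k⟫ / 2) :
    ‖a' - a‖ ≤ 2 * ‖L‖ * ‖x' - x‖ := by
  rcases eq_or_ne (a' - a) 0 with h0 | h0
  · rw [h0, norm_zero]; positivity
  have hn : 0 < ‖a' - a‖ := norm_pos_iff.mpr h0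
  set k : F := (‖x' - x‖ / ‖a' - a‖) • (a' - a) with hk
  have hkn : ‖k‖ = ‖x' - x‖ := by
    rw [hk, norm_smul, Real.norm_of_nonneg (by positivity)]; field_simp
  have h1 := ha' (x' + k)
  have h2 := ha x'
  have h3 := h (x' - x + k)
  have e : x + (x' - x + k) = x' + k := by abel
  rw [e, inner_add_right] at h3
  rw [add_sub_cancel_left] at h1
  have h4 : ⟪L (x' - x + k), x' - x + k⟫ ≤ ‖L‖ * (2 * ‖x' - x‖) ^ 2 := by
    have : ‖x' - x + k‖ ≤ 2 * ‖x' - x‖ := by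
      refine (norm_add_le _ _).trans ?_
      rw [hkn]; linarith
    calc _ ≤ ‖L (x' - x + k)‖ * ‖x' - x + k‖ := real_inner_le_norm _ _
      _ ≤ ‖L‖ * ‖x' - x + k‖ * ‖x' - x + k‖ := by gcongr; exact L.le_opNorm _
      _ = ‖L‖ * ‖x' - x + k‖ ^ 2 := by ring
      _ ≤ _ := by gcongr
  have h5 : ⟪a' - a, k⟫ ≤ 2 * ‖L‖ * ‖x' - x‖ ^ 2 := by
    rw [inner_sub_left]; nlinarith
  have h6 : ⟪a' - a, k⟫ = ‖x' - x‖ * ‖a' - a‖ := by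
    rw [hk, inner_smul_right, real_inner_self_eq_norm_sq]; field_simp
  rw [h6] at h5
  rcases eq_or_ne (‖x' - x‖) 0 with hx | hx
  · have hxx : x' = x := by rwa [norm_eq_zero, sub_eq_zero] at hx
    subst hxx
    exact absurd (sub_eq_zero.mpr (ha'.eq_of_contact h)) h0
  · have : 0 < ‖x' - x‖ := lt_of_le_of_ne (norm_nonneg _) (Ne.symm hx)
    nlinarith

/-- The resolvent of the subdifferential of a finite convex function is everywhere defined. -/
lemma exists_resolvent [FiniteDimensional ℝ F] {C : F → ℝ} (hsub : ∀ x, ∃ a, IsSubgradient C x a)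
    (hcont : Continuous C) (y : F) : ∃ x, IsSubgradient C x (y - x) := by
  obtain ⟨a, ha⟩ := hsub y
  have hco : ∀ᶠ x in cocompact F, C y + ‖y - y‖ ^ 2 / 2 ≤ C x + ‖x - y‖ ^ 2 / 2 := by
    have h1 : Tendsto (fun x : F => ‖x - y‖) (cocompact F) atTop := by
      have := tendsto_norm_cocompact_atTop (E := F)
      refine tendsto_atTop_mono (f := fun x : F => ‖x‖ - ‖y‖) (fun x => norm_sub_norm_le x y) ?_
      exact tendsto_atTop_add_const_right _ _ this
    filter_upwards [h1.eventually_ge_atTop (2 * ‖a‖)] with x hx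
    have h2 := ha x
    have h3 : -(‖a‖ * ‖x - y‖) ≤ ⟪a, x - y⟫ := by
      have := abs_real_inner_le_norm a (x - y)
      linarith [neg_abs_le ⟪a, x - y⟫]
    rw [sub_self, norm_zero]
    nlinarith [norm_nonneg (x - y), norm_nonneg a]
  obtain ⟨x, hx⟩ := Continuous.exists_forall_le' (f := fun x => C x + ‖x - y‖ ^ 2 / 2)
    (by fun_prop) y hco
  refine ⟨x, fun x' => ?_⟩
  set h := x' - x with hh
  have key : ∀ t : ℝ, 0 < t → t ≤ 1 → C x + ⟪y - x, h⟫ - t / 2 * ‖h‖ ^ 2 ≤ C x' := by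
    intro t ht ht1
    have h1 := hx (x + t • h)
    have h2 : ‖x + t • h - y‖ ^ 2 = ‖x - y‖ ^ 2 + 2 * t * ⟪x - y, h⟫ + t ^ 2 * ‖h‖ ^ 2 := by
      rw [show x + t • h - y = (x - y) + t • h by abel, norm_add_sq_real, inner_smul_right,
        norm_smul, mul_pow, Real.norm_eq_abs, sq_abs]
      ring
    obtain ⟨c, hc⟩ := hsub (x + t • h)
    have h3 := hc x
    have h4 := hc x'
    have e1 : x - (x + t • h) = (-t) • h := by rw [neg_smul]; abel
    have e2 : x' - (x + t • h) = (1 - t) • h := by rw [sub_smul, one_smul, hh]; abel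
    rw [e1, inner_smul_right] at h3
    rw [e2, inner_smul_right] at h4
    have h5 : ⟪x - y, h⟫ = - ⟪y - x, h⟫ := by rw [← inner_neg_left, neg_sub]
    simp only [h2, h5] at h1
    have h6 : C (x + t • h) ≤ (1 - t) * C x + t * C x' := by nlinarith
    have h7 : t * (C x + ⟪y - x, h⟫ - t / 2 * ‖h‖ ^ 2) ≤ t * C x' := by nlinarith
    exact le_of_mul_le_mul_left h7 ht
  have hlim : Tendsto (fun t : ℝ => C x + ⟪y - x, h⟫ - t / 2 * ‖h‖ ^ 2) (𝓝[>] 0)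
      (𝓝 (C x + ⟪y - x, h⟫ - 0 / 2 * ‖h‖ ^ 2)) := by
    apply Tendsto.mono_left _ nhdsWithin_le_nhds
    apply Continuous.tendsto; fun_prop
  have := le_of_tendsto hlim (b := C x') (by
    filter_upwards [Ioc_mem_nhdsGT (show (0:ℝ) < 1 by norm_num)] with t ht
    exact key t ht.1 ht.2)
  simpa using this

/-- Integrating one-sided increments with a quadratic error. -/
lemma sub_le_of_increment_le {ψ : ℝ → ℝ} {k K : ℝ}
    (h : ∀ s t, 0 ≤ s → s ≤ t → t ≤ 1 → ψ t - ψ s ≤ (t - s) * k + K * (t - s) ^ 2) :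
    ψ 1 - ψ 0 ≤ k := by
  have hN : ∀ N : ℕ, ψ 1 - ψ 0 ≤ k + K * (1 / ((N : ℝ) + 1)) := by
    intro N
    have hp : (0 : ℝ) < (N : ℝ) + 1 := by positivity
    have hs := Finset.sum_range_sub (fun i : ℕ => ψ ((i : ℝ) / ((N : ℝ) + 1))) (N + 1)
    simp only [Nat.cast_add, Nat.cast_one, Nat.cast_zero, zero_div, div_self hp.ne'] at hs
    rw [← hs]
    have : ∀ i ∈ Finset.range (N + 1),
        ψ (((i : ℝ) + 1) / ((N : ℝ) + 1)) - ψ ((i : ℝ) / ((N : ℝ) + 1)) ≤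
        (1 / ((N : ℝ) + 1)) * k + K * (1 / ((N : ℝ) + 1)) ^ 2 := by
      intro i hi
      have hi' : (i : ℝ) + 1 ≤ (N : ℝ) + 1 := by
        have := Finset.mem_range.mp hi
        exact_mod_cast this
      have := h ((i : ℝ) / ((N : ℝ) + 1)) (((i : ℝ) + 1) / ((N : ℝ) + 1)) (by positivity)
        (by gcongr; linarith) (by rw [div_le_one hp]; exact hi')
      have e : ((i : ℝ) + 1) / ((N : ℝ) + 1) - (i : ℝ) / ((N : ℝ) + 1) = 1 / ((N : ℝ) + 1) := by
        ring
      rwa [e] at this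
    refine (Finset.sum_le_sum this).trans ?_
    rw [Finset.sum_const, Finset.card_range, nsmul_eq_mul]
    push_cast
    apply le_of_eq
    field_simp
  have hl : Tendsto (fun N : ℕ => k + K * (1 / ((N : ℝ) + 1))) atTop (𝓝 (k + K * 0)) :=
    (tendsto_one_div_add_atTop_nhds_zero_nat.const_mul K).const_add k
  simpa using ge_of_tendsto' hl hN

/-- If the subdifferential of a convex function is differentiable at a point, then the function has
a second-order expansion there. -/
lemma second_order_of_subgradient {C : F → ℝ} (hsub : ∀ x, ∃ a, IsSubgradient C x a)
    {x a : F} {B : F →L[ℝ] F} {ε δ : ℝ}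
    (h : ∀ k, ‖k‖ < δ → ∀ a', IsSubgradient C (x + k) a' → ‖a' - a - B k‖ ≤ ε * ‖k‖)
    (k : F) (hk : ‖k‖ < δ) : |C (x + k) - C x - ⟪a, k⟫ - ⟪B k, k⟫ / 2| ≤ ε * ‖k‖ ^ 2 := by
  have herr : ∀ t : ℝ, 0 ≤ t → t ≤ 1 → ∀ a', IsSubgradient C (x + t • k) a' →
      |⟪a', k⟫ - ⟪a, k⟫ - t * ⟪B k, k⟫| ≤ ε * ‖k‖ ^ 2 := by
    intro t ht0 ht1 a' ha'
    have hn : ‖t • k‖ ≤ ‖k‖ := by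
      rw [norm_smul, Real.norm_of_nonneg ht0]
      nlinarith [norm_nonneg k]
    have h1 := h (t • k) (hn.trans_lt hk) a' ha'
    have hε : 0 ≤ ε * ‖t • k‖ := (norm_nonneg _).trans h1
    have h2 : ⟪a' - a - B (t • k), k⟫ = ⟪a', k⟫ - ⟪a, k⟫ - t * ⟪B k, k⟫ := by
      rw [inner_sub_left, inner_sub_left, map_smul, real_inner_smul_left]
    rw [← h2]
    have h0 : ε * ‖t • k‖ * ‖k‖ ≤ ε * ‖k‖ * ‖k‖ := by
      rw [norm_smul, Real.norm_of_nonneg ht0] at *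
      rcases eq_or_lt_of_le (norm_nonneg k) with hk0 | hk0
      · rw [← hk0]; simp
      rcases eq_or_lt_of_le ht0 with ht | ht
      · rw [← ht]
        have := h k hk
        obtain ⟨a'', ha''⟩ := hsub (x + k)
        have := (norm_nonneg _).trans (this a'' ha'')
        have := mul_nonneg this hk0.le
        simpa using this
      · have : 0 ≤ ε := by
          by_contra hneg
          have : ε * (t * ‖k‖) < 0 := mul_neg_of_neg_of_pos (by linarith) (by positivity)
          linarith
        gcongr
    calc _ ≤ ‖a' - a - B (t • k)‖ * ‖k‖ := abs_real_inner_le_norm _ _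
      _ ≤ ε * ‖t • k‖ * ‖k‖ := by gcongr
      _ ≤ ε * ‖k‖ * ‖k‖ := h0
      _ = _ := by ring
  set ψ : ℝ → ℝ := fun t => C (x + t • k) - t * ⟪a, k⟫ - t ^ 2 / 2 * ⟪B k, k⟫ with hψ
  set b := ⟪B k, k⟫
  have hstep : ∀ s t : ℝ, ∀ a', IsSubgradient C (x + t • k) a' →
      C (x + t • k) + (s - t) * ⟪a', k⟫ ≤ C (x + s • k) := by
    intro s t a' ha'
    have := ha' (x + s • k)
    rwa [show x + s • k - (x + t • k) = (s - t) • k by rw [sub_smul]; abel,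
      inner_smul_right] at this
  have hup : ψ 1 - ψ 0 ≤ ε * ‖k‖ ^ 2 := by
    apply sub_le_of_increment_le (K := |b| / 2)
    intro s t hs hst ht
    obtain ⟨a', ha'⟩ := hsub (x + t • k)
    have h1 := hstep s t a' ha'
    have h2 := (abs_le.mp (herr t (hs.trans hst) ht a' ha')).2
    have h3 : (t - s) * (⟪a', k⟫ - ⟪a, k⟫ - t * b) ≤ (t - s) * (ε * ‖k‖ ^ 2) :=
      mul_le_mul_of_nonneg_left h2 (by linarith)
    have h4 : b * (t - s) ^ 2 ≤ |b| * (t - s) ^ 2 := by gcongr; exact le_abs_self b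
    simp only [hψ]
    nlinarith
  have hlo : (fun t => -ψ t) 1 - (fun t => -ψ t) 0 ≤ ε * ‖k‖ ^ 2 := by
    apply sub_le_of_increment_le (ψ := fun t => -ψ t) (K := |b| / 2)
    intro s t hs hst ht
    obtain ⟨a', ha'⟩ := hsub (x + s • k)
    have h1 := hstep t s a' ha'
    have h2 := (abs_le.mp (herr s hs (hst.trans ht) a' ha')).1
    have h3 : (t - s) * (-(ε * ‖k‖ ^ 2)) ≤ (t - s) * (⟪a', k⟫ - ⟪a, k⟫ - s * b) :=
      mul_le_mul_of_nonneg_left h2 (by linarith)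
    have h4 : b * (t - s) ^ 2 ≤ |b| * (t - s) ^ 2 := by gcongr; exact le_abs_self b
    simp only [hψ]
    nlinarith
  simp only [hψ, one_smul, zero_smul, add_zero] at hup hlo
  rw [abs_le]
  constructor <;> linarith

/-- A convex function touched from above, for every small slope `p`, by a quadratic with Hessian
`L`, has a second-order expansion at one of the contact points.  This combines Jensen's lemma with
Alexandrov's theorem. -/
theorem exists_contact_second_order [FiniteDimensional ℝ F] {C : F → ℝ}
    (hsub : ∀ x, ∃ a, IsSubgradient C x a) (hcont : Continuous C) (L : F →L[ℝ] F) {r : ℝ}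
    (hr : 0 < r)
    (hcontact : ∀ p : F, ‖p‖ < r →
      ∃ x, ∀ k, C (x + k) ≤ C x + ⟪L x + p, k⟫ + ⟪L k, k⟫ / 2) :
    ∃ p : F, ‖p‖ < r ∧ ∃ x, (∀ k, C (x + k) ≤ C x + ⟪L x + p, k⟫ + ⟪L k, k⟫ / 2) ∧
      ∃ B : F →L[ℝ] F, ∀ ε > 0, ∀ᶠ k in 𝓝 (0 : F),
        |C (x + k) - C x - ⟪L x + p, k⟫ - ⟪B k, k⟫ / 2| ≤ ε * ‖k‖ ^ 2 := by
  let _ : MeasurableSpace F := borel F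
  have _ : BorelSpace F := ⟨rfl⟩
  set μ : Measure F := Measure.hausdorffMeasure (Module.finrank ℝ F : ℝ) with hμ
  choose J hJ using exists_resolvent hsub hcont
  have hmono : ∀ y y', ‖J y - J y'‖ ^ 2 ≤ ⟪y - y', J y - J y'⟫ := by
    intro y y'
    have h1 := (hJ y').monotone (hJ y)
    rw [show y - J y - (y' - J y') = (y - y') - (J y - J y') by abel, inner_sub_left,
      real_inner_self_eq_norm_sq] at h1
    linarith
  have hJlip : LipschitzWith 1 J := by
    apply LipschitzWith.of_dist_le_mul
    intro y y'
    rw [dist_eq_norm, dist_eq_norm, NNReal.coe_one, one_mul]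
    have h1 := (hmono y y').trans (real_inner_le_norm _ _)
    rcases eq_or_lt_of_le (norm_nonneg (J y - J y')) with h0 | h0
    · rw [← h0]; positivity
    · nlinarith
  have hJu : ∀ x a, IsSubgradient C x a → J (x + a) = x := by
    intro x a ha
    have h1 := ha.monotone (hJ (x + a))
    rw [show x + a - J (x + a) - a = -(J (x + a) - x) by abel, inner_neg_left,
      real_inner_self_eq_norm_sq] at h1
    have : ‖J (x + a) - x‖ = 0 := by nlinarith [norm_nonneg (J (x + a) - x)]
    rwa [norm_eq_zero, sub_eq_zero] at this
  set G : Set F := {y | ∃ p, ‖p‖ < r ∧ y = J y + (L (J y) + p) ∧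
    ∀ k, C (J y + k) ≤ C (J y) + ⟪L (J y) + p, k⟫ + ⟪L k, k⟫ / 2} with hG
  have hΨ : LipschitzWith (1 + 1 + ‖L‖₊ * 1) (fun y => y - J y - L (J y)) :=
    (LipschitzWith.id.sub hJlip).sub (L.lipschitz.comp hJlip)
  have hball : Metric.ball (0 : F) r ⊆ (fun y => y - J y - L (J y)) '' G := by
    intro p hp
    rw [mem_ball_zero_iff] at hp
    obtain ⟨x, hx⟩ := hcontact p hp
    obtain ⟨a, ha⟩ := hsub x
    have hae := ha.eq_of_contact hx
    have hJx := hJu x a ha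
    refine ⟨x + a, ⟨p, hp, ?_, ?_⟩, ?_⟩
    · rw [hJx, hae]
    · rw [hJx]; exact hx
    · change x + a - J (x + a) - L (J (x + a)) = p
      rw [hJx, hae]; abel
  have hne : ∃ y ∈ G, DifferentiableAt ℝ J y := by
    by_contra hcon
    push Not at hcon
    have h0 : μ G = 0 := by
      refine measure_mono_null (fun y hy => ?_) (hJlip.ae_differentiableAt (μ := μ))
      exact hcon y hy
    have h1 : μ ((fun y => y - J y - L (J y)) '' G) = 0 := by
      have := hΨ.hausdorffMeasure_image_le (d := Module.finrank ℝ F) (by positivity) G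
      rw [← hμ, h0, mul_zero] at this
      exact le_antisymm this (by positivity)
    have h2 : μ (Metric.ball (0 : F) r) = 0 := measure_mono_null hball h1
    exact (Metric.measure_ball_pos μ (0 : F) hr).ne' h2
  obtain ⟨y, ⟨p, hp, hyp, hx⟩, hdiff⟩ := hne
  set x := J y with hxdef
  set a := L x + p with ha
  refine ⟨p, hp, x, hx, ?_⟩
  have hya : IsSubgradient C x a := by
    have := hJ y
    rwa [← hxdef, show y - x = a by rw [sub_eq_iff_eq_add]; rw [hyp]; abel] at this
  set c : ℝ := 1 + 2 * ‖L‖ with hc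
  have hcpos : 0 < c := by positivity
  have hlow : ∀ y', ‖y' - y‖ ≤ c * ‖J y' - x‖ := by
    intro y'
    have h1 := hya.norm_sub_le_of_contact (hJ y') hx
    have e : y' - y = (J y' - x) + (y' - J y' - a) := by
      have : y = x + a := hyp
      rw [this]; abel
    rw [e]
    refine (norm_add_le _ _).trans ?_
    rw [hc]; linarith
  obtain ⟨D, hD⟩ := hdiff
  have hDlow : ∀ k, ‖k‖ ≤ c * ‖D k‖ := by
    intro k
    have h1 := hD.hasLineDerivAt k
    have h2 := (hasDerivAt_iff_tendsto_slope_zero.mp h1)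
    have h3 : Tendsto (fun t : ℝ => c * ‖t⁻¹ • (J (y + (0 + t) • k) - J (y + (0:ℝ) • k))‖)
      (𝓝[≠] 0) (𝓝 (c * ‖D k‖)) := (h2.norm).const_mul c
    refine ge_of_tendsto h3 ?_
    filter_upwards [self_mem_nhdsWithin] with t ht
    have h4 := hlow (y + t • k)
    rw [add_sub_cancel_left, norm_smul] at h4
    have ht' : 0 < ‖t‖ := norm_pos_iff.mpr ht
    rw [zero_add, zero_smul, add_zero, norm_smul, norm_inv]
    rw [← hxdef]
    field_simp
    rwa [mul_comm] at h4
  have hinj : Function.Injective D := by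
    rw [injective_iff_map_eq_zero]
    intro k hk
    have := hDlow k
    rw [hk, norm_zero, mul_zero] at this
    exact norm_le_zero_iff.mp this
  set D' : F →L[ℝ] F := LinearMap.toContinuousLinearMap
    ((LinearEquiv.ofInjectiveEndo (D : F →ₗ[ℝ] F) hinj).symm : F →ₗ[ℝ] F) with hD'
  have hD'D : ∀ k, D' (D k) = k := fun k =>
    (LinearEquiv.ofInjectiveEndo (D : F →ₗ[ℝ] F) hinj).symm_apply_apply k
  have hDD' : ∀ k, D (D' k) = k := fun k =>
    (LinearEquiv.ofInjectiveEndo (D : F →ₗ[ℝ] F) hinj).apply_symm_apply k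
  refine ⟨D' - ContinuousLinearMap.id ℝ F, fun ε hε => ?_⟩
  set ε' : ℝ := ε / (c * c) with hε'
  have hε'pos : 0 < ε' := by positivity
  have hlo := (hD.isLittleO).def hε'pos
  rw [Metric.eventually_nhds_iff] at hlo
  obtain ⟨δ, hδ, hlo⟩ := hlo
  rw [Metric.eventually_nhds_iff]
  refine ⟨δ / c, by positivity, fun k hk => ?_⟩
  rw [dist_zero_right] at hk
  refine second_order_of_subgradient hsub (δ := δ / c) (fun k hk a' ha' => ?_) k hk
  set y' := x + k + a' with hy'
  have hJy' : J y' = x + k := hJu _ _ ha'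
  have h1 := hlow y'
  rw [hJy', add_sub_cancel_left] at h1
  have h2 : ‖y' - y‖ < δ := by
    refine h1.trans_lt ?_
    rwa [lt_div_iff₀ hcpos, mul_comm] at hk
  have h3 := hlo (y := y') (by rwa [dist_eq_norm])
  rw [hJy', ← hxdef, add_sub_cancel_left] at h3
  have e : a' - a - (D' - ContinuousLinearMap.id ℝ F) k = - D' (k - D (y' - y)) := by
    rw [map_sub, hD'D]
    simp only [_root_.sub_apply, ContinuousLinearMap.id_apply]
    have : y = x + a := hyp
    rw [this, hy']; abel
  rw [e, norm_neg]
  calc ‖D' (k - D (y' - y))‖ ≤ c * ‖k - D (y' - y)‖ := by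
        have := hDlow (D' (k - D (y' - y)))
        rwa [hDD'] at this
    _ ≤ c * (ε' * ‖y' - y‖) := by gcongr
    _ ≤ c * (ε' * (c * ‖k‖)) := by gcongr
    _ = ε * ‖k‖ := by rw [hε']; field_simp

end ConvexContact

section Doubling

open Filter Topology

variable {F : Type*} [NormedAddCommGroup F] [InnerProductSpace ℝ F]

/-- A function of linear growth is touched from above by every uniformly convex quadratic. -/
lemma exists_contact_of_linear_growth [FiniteDimensional ℝ F] {C : F → ℝ} (hC : Continuous C)
    {R c : ℝ} (hgrow : ∀ x, C x ≤ R * ‖x‖ + c) (L : F →L[ℝ] F)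
    (hsym : ∀ h k, ⟪L h, k⟫ = ⟪h, L k⟫) (hpos : ∀ h, ‖h‖ ^ 2 ≤ ⟪L h, h⟫) (p : F) :
    ∃ x, ∀ k, C (x + k) ≤ C x + ⟪L x + p, k⟫ + ⟪L k, k⟫ / 2 := by
  set f : F → ℝ := fun x => C x - ⟪L x, x⟫ / 2 - ⟪p, x⟫ with hf
  have hev : ∀ᶠ x in cocompact F, f x ≤ f 0 := by
    have h1 := tendsto_norm_cocompact_atTop (E := F)
    have h2 : Tendsto (fun s : ℝ => s * (s / 2 - (R + ‖p‖))) atTop atTop :=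
      tendsto_id.atTop_mul_atTop₀ (tendsto_atTop_add_const_right _ _
        (tendsto_id.atTop_div_const (by norm_num)))
    filter_upwards [(h2.comp h1).eventually_ge_atTop (c - C 0)] with x hx
    have h3 := hgrow x
    have h4 := hpos x
    have h5 : -(‖p‖ * ‖x‖) ≤ ⟪p, x⟫ := by
      linarith [neg_abs_le ⟪p, x⟫, abs_real_inner_le_norm p x]
    simp only [hf, map_zero, inner_zero_right, Function.comp_apply] at *
    nlinarith
  obtain ⟨x, hx⟩ := Continuous.exists_forall_ge' (f := f) (by fun_prop) 0 hev
  refine ⟨x, fun k => ?_⟩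
  have h1 := hx (x + k)
  have h2 : ⟪L k, x⟫ = ⟪L x, k⟫ := by rw [hsym, real_inner_comm]
  simp only [hf, map_add, inner_add_left, inner_add_right, h2] at h1
  rw [inner_add_left]
  linarith

/-- The Legendre transform of a continuous function on a compact set, with attained supremum. -/
lemma exists_legendre {K : Set F} (hK : IsCompact K) (hne : K.Nonempty) {g : F → ℝ}
    (hg : ContinuousOn g K) :
    ∃ C : F → ℝ, (∀ x, ∀ z ∈ K, ⟪z, x⟫ - g z ≤ C x) ∧ ∀ x, ∃ z ∈ K, C x = ⟪z, x⟫ - g z := by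
  have h : ∀ x : F, ∃ z ∈ K, ∀ z' ∈ K, ⟪z', x⟫ - g z' ≤ ⟪z, x⟫ - g z := by
    intro x
    obtain ⟨z, hz, hm⟩ := hK.exists_isMaxOn hne (f := fun z => ⟪z, x⟫ - g z) (by fun_prop)
    exact ⟨z, hz, fun z' hz' => hm hz'⟩
  choose Z hZ hm using h
  exact ⟨fun x => ⟪Z x, x⟫ - g (Z x), fun x z hz => hm x z hz, fun x => ⟨Z x, hZ x, rfl⟩⟩

/-- A Legendre transform over a bounded set is Lipschitz. -/
lemma legendre_lipschitz {K : Set F} {g C : F → ℝ} {R : ℝ} (hR : ∀ z ∈ K, ‖z‖ ≤ R)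
    (h1 : ∀ x, ∀ z ∈ K, ⟪z, x⟫ - g z ≤ C x) (h2 : ∀ x, ∃ z ∈ K, C x = ⟪z, x⟫ - g z) (x y : F) :
    C x ≤ C y + R * ‖x - y‖ := by
  obtain ⟨z, hz, he⟩ := h2 x
  have h3 := h1 y z hz
  have h4 : ⟪z, x - y⟫ ≤ R * ‖x - y‖ :=
    (real_inner_le_norm _ _).trans (by gcongr; exact hR z hz)
  rw [inner_sub_right] at h4
  linarith

/-- The sup-convolution transfers second-order jets back to the original function. -/
lemma jet_of_legendre {K : Set F} {u C : F → ℝ} {lam : ℝ} (hlam : 0 < lam)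
    (h1 : ∀ x, ∀ z ∈ K, ⟪z, x⟫ - (‖z‖ ^ 2 / 2 - lam * u z) ≤ C x) {x z : F}
    (he : C x = ⟪z, x⟫ - (‖z‖ ^ 2 / 2 - lam * u z)) {B : F →L[ℝ] F}
    (hB : ∀ ε > 0, ∀ᶠ k in 𝓝 (0 : F),
        |C (x + k) - C x - ⟪z, k⟫ - ⟪B k, k⟫ / 2| ≤ ε * ‖k‖ ^ 2) :
    ∀ ε > 0, ∀ᶠ k in 𝓝 (0 : F), z + k ∈ K →
      u (z + k) ≤ u z + ⟪lam⁻¹ • (z - x), k⟫ +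
        ⟪(lam⁻¹ • (B - ContinuousLinearMap.id ℝ F)) k, k⟫ / 2 + ε * ‖k‖ ^ 2 := by
  intro ε hε
  filter_upwards [hB (lam * ε) (by positivity)] with k hk hkK
  have h2 := (abs_le.mp hk).2
  have h3 := h1 (x + k) (z + k) hkK
  have e1 : ‖z + k‖ ^ 2 = ‖z‖ ^ 2 + 2 * ⟪z, k⟫ + ‖k‖ ^ 2 := norm_add_sq_real z k
  have e2 : ⟪z + k, x + k⟫ = ⟪z, x⟫ + ⟪z, k⟫ + ⟪x, k⟫ + ‖k‖ ^ 2 := by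
    rw [inner_add_left, inner_add_right, inner_add_right, real_inner_self_eq_norm_sq,
      real_inner_comm x k]
    ring
  have e3 : ⟪(lam⁻¹ • (B - ContinuousLinearMap.id ℝ F)) k, k⟫ =
      lam⁻¹ * (⟪B k, k⟫ - ‖k‖ ^ 2) := by
    rw [_root_.smul_apply, real_inner_smul_left, _root_.sub_apply, inner_sub_left,
      ContinuousLinearMap.id_apply, real_inner_self_eq_norm_sq]
  rw [real_inner_smul_left, e3, inner_sub_left]
  have h4 : lam * u (z + k) ≤ lam * u z + (⟪z, k⟫ - ⟪x, k⟫) + (⟪B k, k⟫ - ‖k‖ ^ 2) / 2 +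
      lam * ε * ‖k‖ ^ 2 := by linarith
  rw [← sub_nonneg] at h4 ⊢
  have h5 : lam * u z + (⟪z, k⟫ - ⟪x, k⟫) + (⟪B k, k⟫ - ‖k‖ ^ 2) / 2 +
      lam * ε * ‖k‖ ^ 2 - lam * u (z + k) = lam * (u z + lam⁻¹ * (⟪z, k⟫ - ⟪x, k⟫) +
        lam⁻¹ * (⟪B k, k⟫ - ‖k‖ ^ 2) / 2 + ε * ‖k‖ ^ 2 - u (z + k)) := by
    field_simp
  rw [h5] at h4
  exact nonneg_of_mul_nonneg_right h4 hlam

end Doubling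

section DoublingJets

open Filter Topology

variable {E : Type*} [NormedAddCommGroup E] [InnerProductSpace ℝ E]

/-- Second-order upper expansion of `u` at `z` relative to `K`, with gradient `a`, Hessian `B`. -/
def HasUpperJet (K : Set E) (u : E → ℝ) (z a : E) (B : E →L[ℝ] E) : Prop :=
  ∀ ε > 0, ∀ᶠ k in 𝓝 (0 : E), z + k ∈ K →
    u (z + k) ≤ u z + ⟪a, k⟫ + ⟪B k, k⟫ / 2 + ε * ‖k‖ ^ 2

/-- A quadratic contact inequality from above is a global maximum property. -/
lemma le_of_contact {C : E → ℝ} {L : E →L[ℝ] E} (hsym : ∀ h k, ⟪L h, k⟫ = ⟪h, L k⟫) {x p : E}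
    (hcon : ∀ k, C (x + k) ≤ C x + ⟪L x + p, k⟫ + ⟪L k, k⟫ / 2) (y : E) :
    C y - ⟪L y, y⟫ / 2 - ⟪p, y⟫ ≤ C x - ⟪L x, x⟫ / 2 - ⟪p, x⟫ := by
  have h1 := hcon (y - x)
  rw [add_sub_cancel, map_sub, inner_sub_left, inner_sub_right, inner_sub_right, inner_sub_right,
    inner_add_left, inner_add_left, hsym y x, real_inner_comm (L x) y] at h1
  linarith

set_option maxHeartbeats 1000000 in
/-- The jets at a perturbed maximum point of doubled sup-convolutions with parameter `lam`. -/
lemma exists_jets_of_supconvolution [FiniteDimensional ℝ E] {K : Set E} (hK : IsCompact K)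
    (hne : K.Nonempty) {u v : E → ℝ} (hu : ContinuousOn u K) (hv : ContinuousOn v K)
    (A : E →L[ℝ] E) (hsym : ∀ h k, ⟪A h, k⟫ = ⟪h, A k⟫) (hpos : ∀ h, 0 ≤ ⟪A h, h⟫)
    {lam r : ℝ} (hlam : 0 < lam) (hr : 0 < r) :
    ∃ x y p q : E, ∃ z ∈ K, ∃ w ∈ K, ∃ B₁ B₂ : E →L[ℝ] E, ‖p‖ < r ∧ ‖q‖ < r ∧
      z = x + lam • A (x - y) + p ∧ w = y - lam • A (x - y) + q ∧
      (∀ z' ∈ K, ∀ w' ∈ K,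
        lam * (u z' + v w' - ⟪A (z' - w'), z' - w'⟫ / 2) - ⟪p, z'⟫ - ⟪q, w'⟫ ≤
        lam * (u z + v w - ⟪A (x - y), x - y⟫ / 2) - ‖z - x‖ ^ 2 / 2 - ‖w - y‖ ^ 2 / 2
          - ⟪p, x⟫ - ⟪q, y⟫) ∧
      HasUpperJet K u z (lam⁻¹ • (z - x)) B₁ ∧ HasUpperJet K v w (lam⁻¹ • (w - y)) B₂ ∧
      ∀ h k, ⟪B₁ h, h⟫ + ⟪B₂ k, k⟫ ≤ ⟪A (h - k), h - k⟫ := by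
  obtain ⟨R, hR⟩ : ∃ R, ∀ z ∈ K, ‖z‖ ≤ R := hK.isBounded.exists_norm_le
  have hg : ∀ u : E → ℝ, ContinuousOn u K →
      ContinuousOn (fun z => ‖z‖ ^ 2 / 2 - lam * u z) K := fun u hu => by fun_prop
  obtain ⟨Cu, hu1, hu2⟩ := exists_legendre hK hne (hg u hu)
  obtain ⟨Cv, hv1, hv2⟩ := exists_legendre hK hne (hg v hv)
  have hR0 : 0 ≤ R := (norm_nonneg _).trans (hR _ hne.some_mem)
  have hLu := legendre_lipschitz hR hu1 hu2
  have hLv := legendre_lipschitz hR hv1 hv2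
  have hcont : ∀ C : E → ℝ, (∀ x y, C x ≤ C y + R * ‖x - y‖) → Continuous C := by
    intro C hC
    have : LipschitzWith ⟨R, hR0⟩ C := by
      apply LipschitzWith.of_le_add_mul
      intro x y
      rw [dist_eq_norm]; exact hC x y
    exact this.continuous
  have hCu := hcont Cu hLu
  have hCv := hcont Cv hLv
  let F := WithLp 2 (E × E)
  let mk : E → E → F := fun h k => WithLp.toLp 2 (h, k)
  let C : F → ℝ := fun ζ => Cu ζ.fst + Cv ζ.snd
  have hC : Continuous C :=
    (hCu.comp (WithLp.continuous_fst _ _ _)).add (hCv.comp (WithLp.continuous_snd _ _ _))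
  have inner_mk : ∀ ζ ζ' : F, ⟪ζ, ζ'⟫ = ⟪ζ.fst, ζ'.fst⟫ + ⟪ζ.snd, ζ'.snd⟫ :=
    fun ζ ζ' => WithLp.prod_inner_apply ζ ζ'
  have hn : ∀ ζ : F, ‖ζ‖ ^ 2 = ‖ζ.fst‖ ^ 2 + ‖ζ.snd‖ ^ 2 := by
    intro ζ
    rw [← real_inner_self_eq_norm_sq, inner_mk, real_inner_self_eq_norm_sq,
      real_inner_self_eq_norm_sq]
  let D : F →L[ℝ] E := A ∘L (WithLp.fstL 2 ℝ E E - WithLp.sndL 2 ℝ E E)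
  let e : (E × E) →L[ℝ] F := ((WithLp.prodContinuousLinearEquiv 2 ℝ E E).symm : (E × E) →L[ℝ] F)
  let L : F →L[ℝ] F := ContinuousLinearMap.id ℝ F + lam • (e ∘L (D.prod (-D)))
  have hLf : ∀ ζ : F, (L ζ).fst = ζ.fst + lam • A (ζ.fst - ζ.snd) := fun ζ => rfl
  have hLs : ∀ ζ : F, (L ζ).snd = ζ.snd - lam • A (ζ.fst - ζ.snd) := by
    intro ζ
    rw [sub_eq_add_neg, ← smul_neg]; rfl
  have hLq : ∀ ζ ζ' : F, ⟪L ζ, ζ'⟫ = ⟪ζ, ζ'⟫ +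
      lam * ⟪A (ζ.fst - ζ.snd), ζ'.fst - ζ'.snd⟫ := by
    intro ζ ζ'
    rw [inner_mk, hLf, hLs, inner_mk, inner_add_left, inner_sub_left, real_inner_smul_left,
      real_inner_smul_left, inner_sub_right]
    ring
  have hLsym : ∀ h k, ⟪L h, k⟫ = ⟪h, L k⟫ := by
    intro h k
    rw [hLq, real_inner_comm (L k) h, hLq, real_inner_comm h k, hsym,
      real_inner_comm (A (k.fst - k.snd))]
  have hLpos : ∀ h, ‖h‖ ^ 2 ≤ ⟪L h, h⟫ := by
    intro h
    rw [hLq, real_inner_self_eq_norm_sq]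
    have := mul_nonneg hlam.le (hpos (h.fst - h.snd))
    linarith
  have hgrow : ∀ ζ : F, C ζ ≤ (R + R) * ‖ζ‖ + (Cu 0 + Cv 0) := by
    intro ζ
    have h1 := hLu ζ.fst 0
    have h2 := hLv ζ.snd 0
    rw [sub_zero] at h1 h2
    have h3 : ‖ζ.fst‖ ≤ ‖ζ‖ := WithLp.norm_fst_le _ ζ
    have h4 : ‖ζ.snd‖ ≤ ‖ζ‖ := WithLp.norm_snd_le _ ζ
    have h5 := mul_le_mul_of_nonneg_left h3 hR0
    have h6 := mul_le_mul_of_nonneg_left h4 hR0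
    change Cu ζ.fst + Cv ζ.snd ≤ _
    linarith
  have hsubz : ∀ (ζ : F) (z w : E), z ∈ K → w ∈ K →
      Cu ζ.fst = ⟪z, ζ.fst⟫ - (‖z‖ ^ 2 / 2 - lam * u z) →
      Cv ζ.snd = ⟪w, ζ.snd⟫ - (‖w‖ ^ 2 / 2 - lam * v w) → IsSubgradient C ζ (mk z w) := by
    intro ζ z w hz hw h1 h2 ζ'
    have h3 := hu1 ζ'.fst z hz
    have h4 := hv1 ζ'.snd w hw
    have h5 : ⟪mk z w, ζ' - ζ⟫ = ⟪z, ζ'.fst⟫ - ⟪z, ζ.fst⟫ + (⟪w, ζ'.snd⟫ - ⟪w, ζ.snd⟫) := by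
      rw [inner_mk, ← inner_sub_right, ← inner_sub_right]; rfl
    rw [h5]
    change Cu ζ.fst + Cv ζ.snd + _ ≤ Cu ζ'.fst + Cv ζ'.snd
    linarith
  have hsub : ∀ ζ, ∃ a, IsSubgradient C ζ a := by
    intro ζ
    obtain ⟨z, hz, h1⟩ := hu2 ζ.fst
    obtain ⟨w, hw, h2⟩ := hv2 ζ.snd
    exact ⟨_, hsubz ζ z w hz hw h1 h2⟩
  obtain ⟨P, hP, ζ, hcon, B, hB⟩ := exists_contact_second_order hsub hC L hr
    (fun p _ => exists_contact_of_linear_growth hC hgrow L hLsym hLpos p)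
  obtain ⟨z, hz, hze⟩ := hu2 ζ.fst
  obtain ⟨w, hw, hwe⟩ := hv2 ζ.snd
  have hmax := le_of_contact hLsym hcon
  have hgrad : mk z w = L ζ + P := (hsubz ζ z w hz hw hze hwe).eq_of_contact hcon
  have hz' : z = ζ.fst + lam • A (ζ.fst - ζ.snd) + P.fst :=
    (congrArg WithLp.fst hgrad).trans rfl
  have hw' : w = ζ.snd - lam • A (ζ.fst - ζ.snd) + P.snd := by
    rw [← hLs]
    exact (congrArg WithLp.snd hgrad).trans rfl
  rw [← hgrad] at hB hcon
  let inlF : E →L[ℝ] F := e ∘L ContinuousLinearMap.inl ℝ E E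
  let inrF : E →L[ℝ] F := e ∘L ContinuousLinearMap.inr ℝ E E
  let b₁ : E →L[ℝ] E := (WithLp.fstL 2 ℝ E E) ∘L B ∘L inlF
  let b₂ : E →L[ℝ] E := (WithLp.sndL 2 ℝ E E) ∘L B ∘L inrF
  have hb₁ : ∀ ε > 0, ∀ᶠ k in 𝓝 (0 : E),
      |Cu (ζ.fst + k) - Cu ζ.fst - ⟪z, k⟫ - ⟪b₁ k, k⟫ / 2| ≤ ε * ‖k‖ ^ 2 := by
    intro ε hε
    have h1 := (inlF.continuous.tendsto' 0 0 (map_zero _)).eventually (hB ε hε)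
    filter_upwards [h1] with k hk
    have e1 : C (ζ + inlF k) = Cu (ζ.fst + k) + Cv (ζ.snd + 0) := rfl
    have e2 : ⟪mk z w, inlF k⟫ = ⟪z, k⟫ + ⟪w, (0 : E)⟫ := inner_mk _ _
    have e3 : ⟪B (inlF k), inlF k⟫ = ⟪b₁ k, k⟫ + ⟪(B (inlF k)).snd, (0 : E)⟫ := inner_mk _ _
    have e4 : ‖inlF k‖ ^ 2 = ‖k‖ ^ 2 + ‖(0 : E)‖ ^ 2 := hn _
    have e5 : C ζ = Cu ζ.fst + Cv ζ.snd := rfl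
    rw [e1, e2, e3, e4, e5] at hk
    simpa using hk
  have hb₂ : ∀ ε > 0, ∀ᶠ k in 𝓝 (0 : E),
      |Cv (ζ.snd + k) - Cv ζ.snd - ⟪w, k⟫ - ⟪b₂ k, k⟫ / 2| ≤ ε * ‖k‖ ^ 2 := by
    intro ε hε
    have h1 := (inrF.continuous.tendsto' 0 0 (map_zero _)).eventually (hB ε hε)
    filter_upwards [h1] with k hk
    have e1 : C (ζ + inrF k) = Cu (ζ.fst + 0) + Cv (ζ.snd + k) := rfl
    have e2 : ⟪mk z w, inrF k⟫ = ⟪z, (0 : E)⟫ + ⟪w, k⟫ := inner_mk _ _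
    have e3 : ⟪B (inrF k), inrF k⟫ = ⟪(B (inrF k)).fst, (0 : E)⟫ + ⟪b₂ k, k⟫ := inner_mk _ _
    have e4 : ‖inrF k‖ ^ 2 = ‖(0 : E)‖ ^ 2 + ‖k‖ ^ 2 := hn _
    have e5 : C ζ = Cu ζ.fst + Cv ζ.snd := rfl
    rw [e1, e2, e3, e4, e5] at hk
    simpa using hk
  have hmat : ∀ h k, ⟪b₁ h, h⟫ + ⟪b₂ k, k⟫ ≤
      ‖h‖ ^ 2 + ‖k‖ ^ 2 + lam * ⟪A (h - k), h - k⟫ := by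
    intro h k
    apply le_of_forall_pos_le_add
    intro ε hε
    set N : ℝ := ‖h‖ ^ 2 + ‖k‖ ^ 2 with hN
    set ε' : ℝ := ε / (2 * (N + 1)) with hε'
    have hN0 : 0 ≤ N := by positivity
    have hε'0 : 0 < ε' := by positivity
    have ht : ∀ h : E, Tendsto (fun t : ℝ => t • h) (𝓝[≠] 0) (𝓝 0) := by
      intro h
      apply Tendsto.mono_left _ nhdsWithin_le_nhds
      exact Continuous.tendsto' (by fun_prop) _ _ (zero_smul _ _)
    obtain ⟨t, ⟨ht1, ht2⟩, ht0⟩ := (((ht h).eventually (hb₁ ε' hε'0)).and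
      ((ht k).eventually (hb₂ ε' hε'0)) |>.and self_mem_nhdsWithin).exists
    have h1 := (abs_le.mp ht1).1
    have h2 := (abs_le.mp ht2).1
    have h3 := hcon (t • mk h k)
    have e1 : C (ζ + t • mk h k) = Cu (ζ.fst + t • h) + Cv (ζ.snd + t • k) := rfl
    have e5 : C ζ = Cu ζ.fst + Cv ζ.snd := rfl
    have e2 : ⟪mk z w, t • mk h k⟫ = ⟪z, t • h⟫ + ⟪w, t • k⟫ := inner_mk _ _
    have e3 : ⟪L (t • mk h k), t • mk h k⟫ = t ^ 2 * (N + lam * ⟪A (h - k), h - k⟫) := by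
      rw [map_smul, real_inner_smul_left, inner_smul_right, hLq, real_inner_self_eq_norm_sq, hn]
      change t * (t * (‖h‖ ^ 2 + ‖k‖ ^ 2 + lam * ⟪A (h - k), h - k⟫)) = _
      ring
    rw [e1, e2, e3, e5] at h3
    simp only [map_smul, real_inner_smul_left, inner_smul_right, norm_smul, mul_pow,
      Real.norm_eq_abs, sq_abs] at h1 h2 h3
    have htp : 0 < t ^ 2 := by
      have : t ≠ 0 := ht0
      positivity
    have h4 : t ^ 2 * (⟪b₁ h, h⟫ + ⟪b₂ k, k⟫) ≤
        t ^ 2 * (N + lam * ⟪A (h - k), h - k⟫ + 2 * ε' * N) := by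
      rw [hN]; nlinarith
    have h5 := le_of_mul_le_mul_left h4 htp
    have h6 : 2 * ε' * N ≤ ε := by
      rw [hε']
      have : 2 * (ε / (2 * (N + 1))) * N = ε * (N / (N + 1)) := by field_simp
      rw [this]
      have : N / (N + 1) ≤ 1 := by rw [div_le_one (by positivity)]; linarith
      nlinarith
    linarith
  refine ⟨ζ.fst, ζ.snd, P.fst, P.snd, z, hz, w, hw,
    lam⁻¹ • (b₁ - ContinuousLinearMap.id ℝ E), lam⁻¹ • (b₂ - ContinuousLinearMap.id ℝ E),
    (WithLp.norm_fst_le _ P).trans_lt hP, (WithLp.norm_snd_le _ P).trans_lt hP,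
    hz', hw', ?_, jet_of_legendre hlam hu1 hze hb₁, jet_of_legendre hlam hv1 hwe hb₂, ?_⟩
  · intro z' hz'K w' hw'K
    have h1 := hmax (mk z' w')
    have e1 : C (mk z' w') = Cu z' + Cv w' := rfl
    have e5 : C ζ = Cu ζ.fst + Cv ζ.snd := rfl
    have h2 := hu1 z' z' hz'K
    have h3 := hv1 w' w' hw'K
    rw [real_inner_self_eq_norm_sq] at h2 h3
    have e4 : ⟪L (mk z' w'), mk z' w'⟫ =
        ‖z'‖ ^ 2 + ‖w'‖ ^ 2 + lam * ⟪A (z' - w'), z' - w'⟫ := by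
      rw [hLq, real_inner_self_eq_norm_sq, hn]; rfl
    have e6 : ⟪L ζ, ζ⟫ = ‖ζ.fst‖ ^ 2 + ‖ζ.snd‖ ^ 2 +
        lam * ⟪A (ζ.fst - ζ.snd), ζ.fst - ζ.snd⟫ := by
      rw [hLq, real_inner_self_eq_norm_sq, hn]
    have e7 : ⟪P, mk z' w'⟫ = ⟪P.fst, z'⟫ + ⟪P.snd, w'⟫ := inner_mk _ _
    have e8 : ⟪P, ζ⟫ = ⟪P.fst, ζ.fst⟫ + ⟪P.snd, ζ.snd⟫ := inner_mk _ _
    rw [e1, e4, e5, e6, e7, e8, hze, hwe] at h1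
    rw [norm_sub_sq_real z, norm_sub_sq_real w]
    linarith
  · intro h k
    have h1 := hmat h k
    simp only [_root_.smul_apply, _root_.sub_apply, real_inner_smul_left, inner_sub_left,
      ContinuousLinearMap.id_apply, real_inner_self_eq_norm_sq]
    have : lam⁻¹ * (⟪b₁ h, h⟫ - ‖h‖ ^ 2) + lam⁻¹ * (⟪b₂ k, k⟫ - ‖k‖ ^ 2) =
      lam⁻¹ * (⟪b₁ h, h⟫ + ⟪b₂ k, k⟫ - ‖h‖ ^ 2 - ‖k‖ ^ 2) := by ring
    rw [this, inv_mul_le_iff₀ hlam]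
    linarith

end DoublingJets

section DoublingMax

open Filter Topology

variable {E : Type*} [NormedAddCommGroup E] [InnerProductSpace ℝ E]

set_option maxHeartbeats 800000 in
/-- Approximate maxima of the doubled functional `u z + v w - ⟪A (z - w), z - w⟫ / 2` carry
second-order jets ordered by `A`. -/
theorem exists_doubling_jets [FiniteDimensional ℝ E] {K : Set E} (hK : IsCompact K)
    (hne : K.Nonempty) {u v : E → ℝ} (hu : ContinuousOn u K) (hv : ContinuousOn v K)
    (A : E →L[ℝ] E) (hsym : ∀ h k, ⟪A h, k⟫ = ⟪h, A k⟫) (hpos : ∀ h, 0 ≤ ⟪A h, h⟫)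
    {η : ℝ} (hη : 0 < η) :
    ∃ z ∈ K, ∃ w ∈ K, ∃ a₁ a₂ : E, ∃ B₁ B₂ : E →L[ℝ] E,
      (∀ z' ∈ K, ∀ w' ∈ K, u z' + v w' - ⟪A (z' - w'), z' - w'⟫ / 2 ≤
        u z + v w - ⟪A (z - w), z - w⟫ / 2 + η) ∧
      HasUpperJet K u z a₁ B₁ ∧ HasUpperJet K v w a₂ B₂ ∧
      ‖a₁ - A (z - w)‖ ≤ η ∧ ‖a₂ + A (z - w)‖ ≤ η ∧
      ∀ h k, ⟪B₁ h, h⟫ + ⟪B₂ k, k⟫ ≤ ⟪A (h - k), h - k⟫ := by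
  obtain ⟨R, hR⟩ : ∃ R, ∀ z ∈ K, ‖z‖ ≤ R := hK.isBounded.exists_norm_le
  have hR0 : 0 ≤ R := (norm_nonneg _).trans (hR _ hne.some_mem)
  have hA0 := norm_nonneg A
  set c : ℝ := 4 * (R + 1) + 4 * ‖A‖ * (R + 1) + 1 with hc
  have hc1 : 0 < c := by positivity
  set s : ℝ := min 1 (η / c) with hs
  have hs0 : 0 < s := lt_min one_pos (by positivity)
  have hs1 : s ≤ 1 := min_le_left _ _
  have hsη : s * c ≤ η := (le_div_iff₀ hc1).mp (min_le_right _ _)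
  set Q : ℝ := ‖A‖ * (2 * R) ^ 2 with hQ
  have hQ0 : 0 ≤ Q := by positivity
  set lam : ℝ := s ^ 2 / (2 * Q + 8) with hlam
  have hlam0 : 0 < lam := by positivity
  have hlamQ : lam * (2 * Q + 8) = s ^ 2 := div_mul_cancel₀ _ (by positivity)
  have hlams : lam ≤ s := by nlinarith
  have hlam1 : lam ≤ 1 := hlams.trans hs1
  obtain ⟨x, y, p, q, z, hz, w, hw, B₁, B₂, hp, hq, hzx, hwy, hmax, hj₁, hj₂, hB⟩ :=
    exists_jets_of_supconvolution hK hne hu hv A hsym hpos hlam0 (pow_pos hlam0 2)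
  have hbd : ∀ d, ⟪A d, d⟫ ≤ ‖A‖ * ‖d‖ ^ 2 := fun d => by
    have := real_inner_le_norm (A d) d
    have h2 := mul_le_mul_of_nonneg_right (A.le_opNorm d) (norm_nonneg d)
    linarith
  have hin : ∀ p d : E, ‖p‖ < lam ^ 2 → ⟪p, d⟫ ≤ lam ^ 2 * ‖d‖ := fun p d hp =>
    (real_inner_le_norm p d).trans (mul_le_mul_of_nonneg_right hp.le (norm_nonneg d))
  have hzR := hR z hz
  have hwR := hR w hw
  have hX : ‖z - x‖ ^ 2 + ‖w - y‖ ^ 2 ≤ s ^ 2 := by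
    have h1 := hmax z hz w hw
    have h2 := hin p (z - x) hp
    have h3 := hin q (w - y) hq
    rw [inner_sub_right] at h2 h3
    have h4 := hbd (z - w)
    have h5 : ‖z - w‖ ≤ 2 * R := (norm_sub_le _ _).trans (by linarith)
    have h6 : ‖A‖ * ‖z - w‖ ^ 2 ≤ Q := by rw [hQ]; gcongr
    have h7 := mul_le_mul_of_nonneg_left (h4.trans h6) hlam0.le
    have h8 := mul_nonneg hlam0.le (hpos (x - y))
    have h9 : lam ^ 2 * lam ^ 2 ≤ lam := by
      rw [← pow_add]; exact pow_le_of_le_one hlam0.le hlam1 (by norm_num)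
    nlinarith [sq_nonneg (‖z - x‖ - 2 * lam ^ 2), sq_nonneg (‖w - y‖ - 2 * lam ^ 2)]
  have hzs : ‖z - x‖ ≤ s := by
    apply le_of_sq_le_sq _ hs0.le; nlinarith [sq_nonneg ‖w - y‖]
  have hws : ‖w - y‖ ≤ s := by
    apply le_of_sq_le_sq _ hs0.le; nlinarith [sq_nonneg ‖z - x‖]
  have hd : ‖(x - y) - (z - w)‖ ≤ 2 * s := by
    have : (x - y) - (z - w) = (w - y) - (z - x) := by abel
    rw [this]
    exact (norm_sub_le _ _).trans (by linarith)
  have hAd : ‖A (x - y) - A (z - w)‖ ≤ ‖A‖ * (2 * s) := by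
    rw [← map_sub]
    exact (A.le_opNorm _).trans (mul_le_mul_of_nonneg_left hd hA0)
  have hinv : ∀ p : E, ‖p‖ < lam ^ 2 → ‖lam⁻¹ • p‖ ≤ s := by
    intro p hp
    rw [norm_smul, norm_inv, Real.norm_of_nonneg hlam0.le, inv_mul_le_iff₀ hlam0]
    nlinarith
  have hηs : ‖A‖ * (2 * s) + s ≤ η := by
    refine le_trans ?_ hsη
    rw [hc]; nlinarith [mul_nonneg hA0 hR0, mul_nonneg hA0 hs0.le, mul_nonneg hR0 hs0.le,
      mul_nonneg (mul_nonneg hA0 hR0) hs0.le]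
  refine ⟨z, hz, w, hw, _, _, B₁, B₂, ?_, hj₁, hj₂, ?_, ?_, hB⟩
  · intro z' hz' w' hw'
    have h1 := hmax z' hz' w' hw'
    have h2 := hin p (z' - x) hp
    have h3 := hin q (w' - y) hq
    rw [inner_sub_right] at h2 h3
    have hz'R := hR z' hz'
    have hw'R := hR w' hw'
    have h4 : ‖z' - x‖ ≤ 2 * (R + 1) := by
      have : z' - x = (z' - z) + (z - x) := by abel
      rw [this]
      have := norm_add_le (z' - z) (z - x)
      have := norm_sub_le z' z
      linarith
    have h5 : ‖w' - y‖ ≤ 2 * (R + 1) := by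
      have : w' - y = (w' - w) + (w - y) := by abel
      rw [this]
      have := norm_add_le (w' - w) (w - y)
      have := norm_sub_le w' w
      linarith
    have h6 : lam * (u z' + v w' - ⟪A (z' - w'), z' - w'⟫ / 2) ≤
        lam * (u z + v w - ⟪A (x - y), x - y⟫ / 2 + lam * (4 * (R + 1))) := by
      have := mul_le_mul_of_nonneg_left h4 (sq_nonneg lam)
      have := mul_le_mul_of_nonneg_left h5 (sq_nonneg lam)
      rw [mul_add lam (u z + v w - ⟪A (x - y), x - y⟫ / 2), ← mul_assoc, ← pow_two]
      linarith [sq_nonneg ‖z - x‖, sq_nonneg ‖w - y‖]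
    have h7 := le_of_mul_le_mul_left h6 hlam0
    have h8 : ⟪A (z - w), z - w⟫ - ⟪A (x - y), x - y⟫ ≤ ‖A‖ * (2 * s) * (4 * (R + 1)) := by
      have e : ⟪A (z - w), z - w⟫ - ⟪A (x - y), x - y⟫ =
          -⟪A (x - y) - A (z - w), (x - y) + (z - w)⟫ := by
        rw [inner_sub_left, inner_add_right, inner_add_right, hsym (z - w) (x - y),
          real_inner_comm (A (x - y)) (z - w)]
        ring
      rw [e]
      refine (neg_le_abs _).trans ((abs_real_inner_le_norm _ _).trans ?_)
      apply mul_le_mul hAd _ (norm_nonneg _) (by positivity)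
      have e2 : (x - y) + (z - w) = ((x - y) - (z - w)) + (2 : ℝ) • (z - w) := by
        rw [two_smul]; abel
      rw [e2]
      refine (norm_add_le _ _).trans ?_
      rw [norm_smul, Real.norm_ofNat]
      have := norm_sub_le z w
      linarith
    have h9 : lam * (4 * (R + 1)) ≤ s * (4 * (R + 1)) := by gcongr
    have h10 : s * c = s * (4 * (R + 1)) + ‖A‖ * (2 * s) * (4 * (R + 1)) / 2 + s := by
      rw [hc]; ring
    linarith
  · have e : lam⁻¹ • (z - x) - A (z - w) = (A (x - y) - A (z - w)) + lam⁻¹ • p := by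
      have : z - x = lam • A (x - y) + p := by nth_rewrite 1 [hzx]; abel
      rw [this, smul_add, smul_smul, inv_mul_cancel₀ hlam0.ne', one_smul]
      abel
    rw [e]
    exact (norm_add_le _ _).trans ((add_le_add hAd (hinv p hp)).trans hηs)
  · have e : lam⁻¹ • (w - y) + A (z - w) = -(A (x - y) - A (z - w)) + lam⁻¹ • q := by
      have : w - y = -(lam • A (x - y)) + q := by nth_rewrite 1 [hwy]; abel
      rw [this, smul_add, smul_neg, smul_smul, inv_mul_cancel₀ hlam0.ne', one_smul]
      abel
    rw [e]
    refine (norm_add_le _ _).trans ?_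
    rw [norm_neg]
    exact (add_le_add hAd (hinv q hq)).trans hηs

end DoublingMax

section TestFunctions

open Filter Topology

lemma ContDiffAt.exists_hasCompactSupport {E : Type*} [NormedAddCommGroup E] [NormedSpace ℝ E]
    [FiniteDimensional ℝ E] {φ : E → ℝ} {x : E} {m : ℕ} (h : ContDiffAt ℝ m φ x) :
    ∃ ψ : E → ℝ, ContDiff ℝ m ψ ∧ HasCompactSupport ψ ∧ ψ =ᶠ[𝓝 x] φ := by
  obtain ⟨r, hr, hball⟩ := Metric.eventually_nhds_iff_ball.mp (h.eventually (by simp))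
  let β : ContDiffBump x := ⟨r / 3, r / 2, by positivity, by linarith⟩
  refine ⟨fun y => β y * φ y, ?_, β.hasCompactSupport.mul_right, ?_⟩
  · rw [contDiff_iff_contDiffAt]
    intro y
    by_cases hy : y ∈ Metric.ball x r
    · exact β.contDiffAt.mul (hball y hy)
    · have hev : (fun y => β y * φ y) =ᶠ[𝓝 y] fun _ => 0 := by
        have hy' : y ∈ (tsupport β)ᶜ := by
          rw [β.tsupport_eq]
          intro hc
          exact hy (Metric.closedBall_subset_ball (by change r / 2 < r; linarith) hc)
        filter_upwards [(isClosed_tsupport β).isOpen_compl.mem_nhds hy'] with z hz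
        rw [image_eq_zero_of_notMem_tsupport hz, zero_mul]
      exact contDiffAt_const.congr_of_eventuallyEq hev
  · filter_upwards [β.eventuallyEq_one] with y hy
    rw [hy, Pi.one_apply, one_mul]

variable {n : ℕ} {T : ℝ} {G : ℝ → Eucl n → ℝ → Eucl n → Matrix (Fin n) (Fin n) ℝ → ℝ}
  {g : Eucl n → ℝ} {w : ℝ → Eucl n → ℝ}

/-- The subsolution inequality for test functions that are `C³` only near the contact point. -/
lemma IsViscositySubsolution.le_of_contDiffAt (h : IsViscositySubsolution T G g w)
    {φ : ℝ → Eucl n → ℝ} {t : ℝ} {x : Eucl n} (ht : t ∈ Set.Ico 0 T)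
    (hφ : ContDiffAt ℝ 3 (fun p : ℝ × Eucl n => φ p.1 p.2) (t, x))
    (hmax : IsLocalMax (fun p : ℝ × Eucl n => w p.1 p.2 - φ p.1 p.2) (t, x)) :
    0 ≤ timeDeriv φ t x + G t x (φ t x) (spaceGrad φ t x) (spaceHess φ t x) := by
  obtain ⟨ψ, hψ, hcs, heq⟩ := ContDiffAt.exists_hasCompactSupport (m := 3) hφ
  have h1 := h.2 (fun t x => ψ (t, x)) ⟨hψ, fun i _ hi => ?_⟩ t ht x ?_
  · have hx : (fun y => ψ (t, y)) =ᶠ[𝓝 x] fun y => φ t y :=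
      (Continuous.tendsto' (f := fun y => (t, y)) (by fun_prop) x _ rfl).eventually heq
    have ht : (fun s => ψ (s, x)) =ᶠ[𝓝 t] fun s => φ s x :=
      (Continuous.tendsto' (f := fun s => (s, x)) (by fun_prop) t _ rfl).eventually heq
    have e1 : timeDeriv (fun t x => ψ (t, x)) t x = timeDeriv φ t x := ht.deriv_eq
    have e2 : spaceGrad (fun t x => ψ (t, x)) t x = spaceGrad φ t x := by
      simp only [spaceGrad, gradient, hx.fderiv_eq]
    have e3 : spaceHess (fun t x => ψ (t, x)) t x = spaceHess φ t x := by
      ext i j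
      simp only [spaceHess, Matrix.of_apply]
      have : (fun y => fderiv ℝ (fun y' => ψ (t, y')) y (EuclideanSpace.single j (1 : ℝ)))
          =ᶠ[𝓝 x] fun y => fderiv ℝ (fun y' => φ t y') y (EuclideanSpace.single j (1 : ℝ)) := by
        filter_upwards [hx.fderiv (𝕜 := ℝ)] with y hy
        rw [hy]
      rw [this.fderiv_eq]
    rw [e1, e2, e3, heq.eq_of_nhds] at h1
    exact h1
  · exact (HasCompactSupport.iteratedFDeriv (𝕜 := ℝ) hcs i).exists_bound_of_continuous
      (hψ.continuous_iteratedFDeriv (by exact_mod_cast hi))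
  · refine IsLocalMax.on ?_ _
    filter_upwards [heq, hmax] with p h2 h3
    simpa only [Prod.mk.eta, h2, heq.eq_of_nhds] using h3

/-- The matrix of a linear operator, in the index convention of `spaceHess`. -/
def opMatrix (L : Eucl n →L[ℝ] Eucl n) : Matrix (Fin n) (Fin n) ℝ :=
  Matrix.of fun i j => (L (EuclideanSpace.single i 1)) j

lemma IsViscositySubsolution.le_of_hasGradientAt (h : IsViscositySubsolution T G g w)
    {φ : ℝ → Eucl n → ℝ} {t : ℝ} {x : Eucl n} (ht : t ∈ Set.Ico 0 T)
    (hφ : ContDiffAt ℝ 3 (fun p : ℝ × Eucl n => φ p.1 p.2) (t, x))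
    (hmax : IsLocalMax (fun p : ℝ × Eucl n => w p.1 p.2 - φ p.1 p.2) (t, x))
    {τ : ℝ} (hτ : HasDerivAt (fun s => φ s x) τ t) {D : Eucl n → Eucl n}
    (hD : ∀ᶠ y in 𝓝 x, HasGradientAt (φ t) (D y) y) {L : Eucl n →L[ℝ] Eucl n}
    (hL : HasFDerivAt D L x) :
    0 ≤ τ + G t x (φ t x) (D x) (opMatrix L) := by
  have h1 := h.le_of_contDiffAt ht hφ hmax
  have e1 : timeDeriv φ t x = τ := hτ.deriv
  have e2 : spaceGrad φ t x = D x := hD.self_of_nhds.gradient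
  have e3 : spaceHess φ t x = opMatrix L := by
    ext i j
    simp only [spaceHess, opMatrix, Matrix.of_apply]
    have h2 : (fun y => fderiv ℝ (fun y' => φ t y') y (EuclideanSpace.single j (1 : ℝ)))
        =ᶠ[𝓝 x] fun y => ⟪D y, EuclideanSpace.single j (1 : ℝ)⟫ := by
      filter_upwards [hD] with y hy
      rw [hy.hasFDerivAt.fderiv]
      rfl
    rw [h2.fderiv_eq, (hL.inner ℝ (hasFDerivAt_const _ x)).fderiv]
    simp [PiLp.inner_apply]
  rw [e1, e2, e3] at h1
  exact h1

/-- The negative of a supersolution is a subsolution of the reflected equation. -/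
lemma IsViscositySupersolution.neg (h : IsViscositySupersolution T G g w) :
    IsViscositySubsolution T (fun t x y p X => -G t x (-y) (-p) (-X)) (fun x => -g x)
      (fun t x => -w t x) := by
  refine ⟨fun x => neg_le_neg (h.1 x), fun φ hφ t ht x hmax => ?_⟩
  have h1 := h.2 (fun t x => -φ t x) ⟨hφ.1.neg, fun i hi hi' => ?_⟩ t ht x ?_
  · have e1 : timeDeriv (fun t x => -φ t x) t x = -timeDeriv φ t x := deriv.fun_neg
    have e2 : spaceGrad (fun t x => -φ t x) t x = -spaceGrad φ t x := by
      simp only [spaceGrad, gradient, fderiv_fun_neg, map_neg]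
    have e3 : spaceHess (fun t x => -φ t x) t x = -spaceHess φ t x := by
      ext i j
      simp [spaceHess, fderiv_fun_neg]
    rw [e1, e2, e3] at h1
    linarith
  · obtain ⟨M, hM⟩ := hφ.2 i hi hi'
    refine ⟨M, fun p => ?_⟩
    have e : iteratedFDeriv ℝ i (fun q : ℝ × Eucl n => -φ q.1 q.2) p =
        -iteratedFDeriv ℝ i (fun q : ℝ × Eucl n => φ q.1 q.2) p := iteratedFDeriv_neg_apply
    rw [e, norm_neg]
    exact hM p
  · filter_upwards [hmax] with p hp
    change w t x - -φ t x ≤ w p.1 p.2 - -φ p.1 p.2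
    change -w p.1 p.2 - φ p.1 p.2 ≤ -w t x - φ t x at hp
    linarith

end TestFunctions

section JetTest

open Filter Topology

/-- A continuous linear operator may be replaced by a symmetric one with the same quadratic form. -/
lemma exists_symmetric_operator {E : Type*} [NormedAddCommGroup E] [InnerProductSpace ℝ E]
    [CompleteSpace E] (B : E →L[ℝ] E) (c : ℝ) :
    ∃ S : E →L[ℝ] E, (∀ h k, ⟪S h, k⟫ = ⟪h, S k⟫) ∧ ∀ h, ⟪S h, h⟫ = ⟪B h, h⟫ + c * ‖h‖ ^ 2 := by
  refine ⟨(1 / 2 : ℝ) • (B + ContinuousLinearMap.adjoint B) + c • ContinuousLinearMap.id ℝ E,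
    fun h k => ?_, fun h => ?_⟩
  · simp only [_root_.add_apply, _root_.smul_apply, ContinuousLinearMap.id_apply, inner_add_left,
      inner_add_right, real_inner_smul_left, inner_smul_right,
      ContinuousLinearMap.adjoint_inner_left, ContinuousLinearMap.adjoint_inner_right]
    ring
  · simp only [_root_.add_apply, _root_.smul_apply, ContinuousLinearMap.id_apply, inner_add_left,
      real_inner_smul_left, ContinuousLinearMap.adjoint_inner_left, real_inner_self_eq_norm_sq,
      real_inner_comm (B h) h]
    ring

lemma hasGradientAt_quadratic {E : Type*} [NormedAddCommGroup E] [InnerProductSpace ℝ E]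
    [CompleteSpace E] {S : E →L[ℝ] E} (hS : ∀ h k, ⟪S h, k⟫ = ⟪h, S k⟫) (a k : E) :
    HasGradientAt (fun k => ⟪a, k⟫ + ⟪S k, k⟫ / 2) (a + S k) k := by
  rw [hasGradientAt_iff_hasFDerivAt]
  have h1 : HasFDerivAt (fun k : E => ⟪a, k⟫) (innerSL ℝ a) k := (innerSL ℝ a).hasFDerivAt
  have h2 := (S.hasFDerivAt (x := k)).inner ℝ (hasFDerivAt_id k)
  refine (h1.add (h2.mul_const (1 / 2 : ℝ))).congr_fderiv ?_ |>.congr_of_eventuallyEq ?_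
  · ext h
    simp only [_root_.add_apply, _root_.smul_apply, InnerProductSpace.toDual_apply_apply,
      innerSL_apply_apply, inner_add_left, ContinuousLinearMap.comp_apply,
      ContinuousLinearMap.prod_apply, fderivInnerCLM_apply, ContinuousLinearMap.id_apply, id_eq,
      hS h k, real_inner_comm (S k) h]
    simp only [smul_eq_mul]
    ring
  · exact Eventually.of_forall fun k => by simp [div_eq_mul_inv]

variable {n : ℕ} {T : ℝ} {G : ℝ → Eucl n → ℝ → Eucl n → Matrix (Fin n) (Fin n) ℝ → ℝ}
  {g : Eucl n → ℝ} {w : ℝ → Eucl n → ℝ}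

/-- The subsolution inequality for an upper jet of `w - χ` with `χ` of class `C³`. -/
lemma IsViscositySubsolution.exists_le_of_hasUpperJet (h : IsViscositySubsolution T G g w)
    {χ : ℝ → Eucl n → ℝ} {z a : WithLp 2 (ℝ × Eucl n)} (ht : z.fst ∈ Set.Ico 0 T)
    (hχ : ContDiffAt ℝ 3 (fun p : ℝ × Eucl n => χ p.1 p.2) (z.fst, z.snd))
    {τ : ℝ} (hτ : HasDerivAt (fun s => χ s z.snd) τ z.fst) {D : Eucl n → Eucl n}
    (hD : ∀ y, HasGradientAt (χ z.fst) (D y) y) {M : Eucl n →L[ℝ] Eucl n}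
    (hM : HasFDerivAt D M z.snd) {K : Set (WithLp 2 (ℝ × Eucl n))} (hK : K ∈ 𝓝 z)
    {B : WithLp 2 (ℝ × Eucl n) →L[ℝ] WithLp 2 (ℝ × Eucl n)}
    (hB : HasUpperJet K (fun z => w z.fst z.snd - χ z.fst z.snd) z a B) {ε : ℝ} (hε : 0 < ε) :
    ∃ N : Eucl n →L[ℝ] Eucl n,
      (∀ h, ⟪N h, h⟫ = ⟪B (WithLp.toLp 2 (0, h)), WithLp.toLp 2 (0, h)⟫ + ε * ‖h‖ ^ 2) ∧
      0 ≤ τ + a.fst + G z.fst z.snd 0 (D z.snd + a.snd) (opMatrix (M + N)) := by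
  obtain ⟨S, hS, hSq⟩ := exists_symmetric_operator B ε
  let e : (ℝ × Eucl n) →L[ℝ] WithLp 2 (ℝ × Eucl n) :=
    ((WithLp.prodContinuousLinearEquiv 2 ℝ ℝ (Eucl n)).symm :
      (ℝ × Eucl n) →L[ℝ] WithLp 2 (ℝ × Eucl n))
  let i₁ := e ∘L ContinuousLinearMap.inl ℝ ℝ (Eucl n)
  let i₂ := e ∘L ContinuousLinearMap.inr ℝ ℝ (Eucl n)
  let snd := WithLp.sndL 2 ℝ ℝ (Eucl n)
  have inner_apply : ∀ ζ ζ' : WithLp 2 (ℝ × Eucl n),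
      ⟪ζ, ζ'⟫ = ⟪ζ.fst, ζ'.fst⟫ + ⟪ζ.snd, ζ'.snd⟫ := fun ζ ζ' => WithLp.prod_inner_apply ζ ζ'
  let q : WithLp 2 (ℝ × Eucl n) → ℝ := fun k => ⟪a, k⟫ + ⟪S k, k⟫ / 2
  have hq : ∀ k, HasFDerivAt q (innerSL ℝ (a + S k)) k := fun k =>
    (hasGradientAt_quadratic hS a k).hasFDerivAt
  let φ : ℝ → Eucl n → ℝ := fun t x => χ t x - χ z.fst z.snd + q (e (t, x) - z)
  have hez : e (z.fst, z.snd) = z := rfl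
  have h1 := h.le_of_hasGradientAt (φ := φ) (t := z.fst) (x := z.snd) (τ := τ + a.fst)
    (D := fun y => D y + (a + S (e (z.fst, y) - z)).snd) (L := M + snd ∘L S ∘L i₂) ht ?_ ?_ ?_
    ?_ ?_
  · refine ⟨snd ∘L S ∘L i₂, fun h => ?_, ?_⟩
    · have h2 : ⟪S (i₂ h), i₂ h⟫ = ⟪(S (i₂ h)).fst, (0 : ℝ)⟫ + ⟪(S (i₂ h)).snd, h⟫ :=
        inner_apply _ _
      have h3 : ‖i₂ h‖ ^ 2 = ‖h‖ ^ 2 := by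
        rw [← real_inner_self_eq_norm_sq, ← real_inner_self_eq_norm_sq]
        have : ⟪i₂ h, i₂ h⟫ = ⟪(0 : ℝ), (0 : ℝ)⟫ + ⟪h, h⟫ := inner_apply _ _
        rw [this, inner_zero_left, zero_add]
      rw [inner_zero_right, zero_add, hSq, h3] at h2
      exact h2.symm
    · simp only [φ, hez, sub_self, q, map_zero, inner_zero_right, zero_div, add_zero] at h1
      exact h1
  · have hqc : ContDiff ℝ 3 q := by
      apply ContDiff.add
      · exact contDiff_const.inner ℝ contDiff_id
      · exact (S.contDiff.inner ℝ contDiff_id).div_const 2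
    have : ContDiff ℝ 3 (fun p : ℝ × Eucl n => q (e p - z)) :=
      hqc.comp (e.contDiff.sub contDiff_const)
    exact (hχ.sub contDiffAt_const).add this.contDiffAt
  · have hc : Tendsto (fun p : ℝ × Eucl n => e p - z) (𝓝 (z.fst, z.snd)) (𝓝 0) :=
      Continuous.tendsto' (by fun_prop) _ _ (by rw [hez, sub_self])
    have hc' : Tendsto (fun p : ℝ × Eucl n => e p) (𝓝 (z.fst, z.snd)) (𝓝 z) :=
      Continuous.tendsto' (by fun_prop) _ _ hez
    filter_upwards [hc.eventually (hB (ε / 2) (by positivity)), hc'.eventually hK] with p h2 h3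
    rw [add_sub_cancel] at h2
    have h4 := h2 h3
    have h5 : q (e p - z) = ⟪a, e p - z⟫ + (⟪B (e p - z), e p - z⟫ + ε * ‖e p - z‖ ^ 2) / 2 := by
      rw [← hSq]
    have h6 : q (e (z.fst, z.snd) - z) = 0 := by
      simp [q, hez]
    change w p.1 p.2 - (χ p.1 p.2 - χ z.fst z.snd + q (e p - z)) ≤
      w z.fst z.snd - (χ z.fst z.snd - χ z.fst z.snd + q (e (z.fst, z.snd) - z))
    change w p.1 p.2 - χ p.1 p.2 ≤ w z.fst z.snd - χ z.fst z.snd + _ + _ + _ at h4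
    rw [h5, h6]
    linarith
  · have h2 : HasDerivAt (fun s : ℝ => e (s, z.snd) - z) (i₁ 1) z.fst :=
      ((e.hasFDerivAt.comp_hasDerivAt z.fst
        ((hasDerivAt_id z.fst).prodMk (hasDerivAt_const _ z.snd))).sub_const z)
    have h3 := (hq _).comp_hasDerivAt z.fst h2
    have h4 : innerSL ℝ (a + S (e (z.fst, z.snd) - z)) (i₁ 1) = a.fst := by
      rw [hez, sub_self, map_zero, add_zero, innerSL_apply_apply]
      have : ⟪a, i₁ 1⟫ = ⟪a.fst, (1 : ℝ)⟫ + ⟪a.snd, (0 : Eucl n)⟫ := inner_apply _ _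
      rw [this]
      simp
    rw [h4] at h3
    exact (hτ.sub_const _).add h3
  · refine Eventually.of_forall fun y => ?_
    rw [hasGradientAt_iff_hasFDerivAt]
    have h2 : HasFDerivAt (fun y : Eucl n => e (z.fst, y) - z) i₂ y :=
      ((e.hasFDerivAt.comp y ((hasFDerivAt_const z.fst y).prodMk (hasFDerivAt_id y))).sub_const z)
    have h3 := (hq _).comp y h2
    refine (((hD y).hasFDerivAt.sub_const _).add h3).congr_fderiv ?_
    ext h
    have h4 : ⟪a + S (e (z.fst, y) - z), i₂ h⟫ = ⟪(a + S (e (z.fst, y) - z)).fst, (0 : ℝ)⟫ +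
      ⟪(a + S (e (z.fst, y) - z)).snd, h⟫ := inner_apply _ _
    rw [inner_zero_right, zero_add] at h4
    simp only [_root_.add_apply, ContinuousLinearMap.comp_apply,
      InnerProductSpace.toDual_apply_apply, innerSL_apply_apply, inner_add_left _ _ h, h4]
  · have h2 : HasFDerivAt (fun y : Eucl n => e (z.fst, y) - z) i₂ z.snd :=
      ((e.hasFDerivAt.comp z.snd
        ((hasFDerivAt_const z.fst _).prodMk (hasFDerivAt_id z.snd))).sub_const z)
    have h3 := snd.hasFDerivAt.comp z.snd ((S.hasFDerivAt.comp z.snd h2).const_add a)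
    exact hM.add h3

end JetTest

section MatrixColumns

variable {n d : ℕ}

/-- The `k`-th column of a matrix as a Euclidean vector. -/
def colVec (M : Matrix (Fin n) (Fin d) ℝ) (k : Fin d) : Eucl n :=
  WithLp.toLp 2 fun i => M i k

lemma colVec_sub (M M' : Matrix (Fin n) (Fin d) ℝ) (k : Fin d) :
    colVec (M - M') k = colVec M k - colVec M' k := rfl

lemma frobenius_norm_sq (M : Matrix (Fin n) (Fin d) ℝ) : ‖M‖ ^ 2 = ∑ i, ∑ k, M i k ^ 2 := by
  rw [Matrix.frobenius_norm_def, ← Real.sqrt_eq_rpow, Real.sq_sqrt (by positivity)]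
  simp

lemma sum_norm_colVec_sq (M : Matrix (Fin n) (Fin d) ℝ) : ∑ k, ‖colVec M k‖ ^ 2 = ‖M‖ ^ 2 := by
  rw [frobenius_norm_sq, Finset.sum_comm]
  simp [EuclideanSpace.norm_sq_eq, colVec]

lemma trace_mul_opMatrix (M : Matrix (Fin n) (Fin d) ℝ) (L : Eucl n →L[ℝ] Eucl n) :
    Matrix.trace (M * Mᵀ * opMatrix L) = ∑ k, ⟪L (colVec M k), colVec M k⟫ := by
  have hcol : ∀ k, colVec M k = ∑ i, M i k • EuclideanSpace.single i (1 : ℝ) := by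
    intro k
    ext j
    simp [colVec, Finset.sum_apply, Pi.single_apply]
  have hL : ∀ k, ⟪L (colVec M k), colVec M k⟫ = ∑ j, M j k * ∑ i, M i k * opMatrix L i j := by
    intro k
    rw [PiLp.inner_apply]
    refine Finset.sum_congr rfl fun j _ => ?_
    have : L (colVec M k) j = ∑ i, M i k * opMatrix L i j := by
      rw [hcol, map_sum]
      simp [opMatrix]
    rw [this]
    simp [colVec]
  simp only [hL, Matrix.trace, Matrix.diag_apply, Matrix.mul_apply, Matrix.transpose_apply,
    Finset.sum_mul, Finset.mul_sum]
  rw [Finset.sum_congr rfl fun j _ => Finset.sum_comm, Finset.sum_comm]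
  refine Finset.sum_congr rfl fun k _ => Finset.sum_congr rfl fun j _ =>
    Finset.sum_congr rfl fun i _ => by ring

lemma rowMul_apply (p : Eucl n) (M : Matrix (Fin n) (Fin d) ℝ) (k : Fin d) :
    rowMul p M k = ⟪p, colVec M k⟫ := by
  simp [rowMul, colVec, PiLp.inner_apply, mul_comm]

lemma rowMul_sub_left (p q : Eucl n) (M : Matrix (Fin n) (Fin d) ℝ) :
    rowMul (p - q) M = rowMul p M - rowMul q M := by
  ext k
  simp [rowMul_apply, inner_sub_left]

lemma rowMul_sub_right (p : Eucl n) (M M' : Matrix (Fin n) (Fin d) ℝ) :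
    rowMul p (M - M') = rowMul p M - rowMul p M' := by
  ext k
  simp [rowMul_apply, colVec_sub, inner_sub_right]

lemma norm_rowMul_le (p : Eucl n) (M : Matrix (Fin n) (Fin d) ℝ) : ‖rowMul p M‖ ≤ ‖p‖ * ‖M‖ := by
  apply le_of_sq_le_sq _ (by positivity)
  rw [mul_pow, ← sum_norm_colVec_sq, EuclideanSpace.norm_sq_eq, Finset.mul_sum]
  refine Finset.sum_le_sum fun k _ => ?_
  rw [rowMul_apply, ← mul_pow, Real.norm_eq_abs]
  exact pow_le_pow_left₀ (abs_nonneg _) (abs_real_inner_le_norm _ _) 2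

end MatrixColumns

section Parameters

open Filter Topology

lemma continuousOn_param {P Q Y : Type*} [MetricSpace P] [TopologicalSpace Q] [MetricSpace Y]
    {F : P → Q → Y} {S : Set Q} {C : ℝ} (hF : ∀ p, ContinuousOn (F p) S)
    (hlip : ∀ q ∈ S, ∀ p p', dist (F p q) (F p' q) ≤ C * dist p p') :
    ContinuousOn (fun x : P × Q => F x.1 x.2) (Set.univ ×ˢ S) := by
  refine continuousOn_prod_of_continuousOn_lipschitzOnWith _ (Real.toNNReal C)
    (fun p _ => hF p) fun q hq => LipschitzOnWith.of_dist_le_mul fun p _ p' _ => ?_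
  exact (hlip q hq p p').trans (mul_le_mul_of_nonneg_right (Real.le_coe_toNNReal C) dist_nonneg)

lemma exists_time_modulus {P U V Y : Type*} [MetricSpace P] [MetricSpace U] [CompactSpace U]
    [MetricSpace V] [CompactSpace V] [MetricSpace Y] {F : P → ℝ × U × V → Y} {T C : ℝ}
    (hF : ∀ p, ContinuousOn (F p) (Set.Icc 0 T ×ˢ (Set.univ : Set (U × V))))
    (hlip : ∀ t ∈ Set.Icc 0 T, ∀ p p' u v,
      dist (F p (t, u, v)) (F p' (t, u, v)) ≤ C * dist p p') {S : Set P} (hS : IsCompact S)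
    {γ : ℝ} (hγ : 0 < γ) :
    ∃ ρ > 0, ∀ p ∈ S, ∀ t ∈ Set.Icc 0 T, ∀ s ∈ Set.Icc 0 T, |t - s| < ρ → ∀ u v,
      dist (F p (t, u, v)) (F p (s, u, v)) < γ := by
  have hc := continuousOn_param hF fun q hq p p' => hlip q.1 hq.1 p p' q.2.1 q.2.2
  have hK : IsCompact (S ×ˢ (Set.Icc 0 T ×ˢ (Set.univ : Set (U × V)))) :=
    hS.prod (isCompact_Icc.prod isCompact_univ)
  have hu := hK.uniformContinuousOn_of_continuous
    (hc.mono (Set.prod_mono (Set.subset_univ _) subset_rfl))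
  obtain ⟨ρ, hρ, h⟩ := Metric.uniformContinuousOn_iff.mp hu γ hγ
  refine ⟨ρ, hρ, fun p hp t ht s hs hts u v => ?_⟩
  refine h (p, t, u, v) ⟨hp, ht, trivial⟩ (p, s, u, v) ⟨hp, hs, trivial⟩ ?_
  simp only [Prod.dist_eq, dist_self, Real.dist_eq]
  simpa [hρ] using hts

lemma exists_isaacs_value_sub_le {U V : Type*} [TopologicalSpace U] [CompactSpace U] [Nonempty U]
    [TopologicalSpace V] [CompactSpace V] [Nonempty V] {F F' : U → V → ℝ}
    (hF : Continuous fun q : U × V => F q.1 q.2) (hF' : Continuous fun q : U × V => F' q.1 q.2)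
    {κ : ℝ} (hκ : 0 < κ) :
    ∃ u v, (⨆ u, ⨅ v, F u v) - (⨆ u, ⨅ v, F' u v) ≤ F u v - F' u v + κ := by
  have hbdd : ∀ {F : U → V → ℝ}, (Continuous fun q : U × V => F q.1 q.2) →
      ∃ C, ∀ u v, |F u v| ≤ C := fun hF => by
    obtain ⟨C, hC⟩ := isCompact_univ.exists_bound_of_continuousOn hF.continuousOn
    exact ⟨C, fun u v => hC (u, v) trivial⟩
  obtain ⟨C, hC⟩ := hbdd hF
  obtain ⟨C', hC'⟩ := hbdd hF'
  have hbelow : ∀ u, BddBelow (Set.range (F u)) := fun u =>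
    ⟨-C, by rintro _ ⟨v, rfl⟩; exact (abs_le.mp (hC u v)).1⟩
  have hbelow' : ∀ u, BddBelow (Set.range (F' u)) := fun u =>
    ⟨-C', by rintro _ ⟨v, rfl⟩; exact (abs_le.mp (hC' u v)).1⟩
  have habove' : BddAbove (Set.range fun u => ⨅ v, F' u v) := by
    refine ⟨C', ?_⟩
    rintro _ ⟨u, rfl⟩
    let v : V := Classical.arbitrary V
    exact (ciInf_le (hbelow' u) v).trans (abs_le.mp (hC' u v)).2
  obtain ⟨u, hu⟩ := exists_lt_of_lt_ciSup
    (show (⨆ u, ⨅ v, F u v) - κ / 2 < ⨆ u, ⨅ v, F u v by linarith)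
  obtain ⟨v, hv⟩ := exists_lt_of_ciInf_lt (show ⨅ v, F' u v < (⨅ v, F' u v) + κ / 2 by linarith)
  have h1 := ciInf_le (hbelow u) v
  have h2 := le_ciSup habove' u
  exact ⟨u, v, by linarith⟩

end Parameters

section Hamiltonian

open Filter Topology

/-- Coefficients of the Isaacs equation with common Lipschitz and linear growth constant `K`. -/
structure IsaacsData {n d : ℕ} {U V : Type*} [TopologicalSpace U] [TopologicalSpace V] (T K : ℝ)
    (b : ℝ → Eucl n → U → V → Eucl n) (σ : ℝ → Eucl n → U → V → Matrix (Fin n) (Fin d) ℝ)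
    (f : ℝ → Eucl n → ℝ → Eucl d → U → V → ℝ) : Prop where
  pos : 0 < K
  b_cont : ∀ x, ContinuousOn (fun q : ℝ × U × V => b q.1 x q.2.1 q.2.2)
    (Set.Icc (0 : ℝ) T ×ˢ (Set.univ : Set (U × V)))
  σ_cont : ∀ x, ContinuousOn (fun q : ℝ × U × V => σ q.1 x q.2.1 q.2.2)
    (Set.Icc (0 : ℝ) T ×ˢ (Set.univ : Set (U × V)))
  f_cont : ∀ x y z, ContinuousOn (fun q : ℝ × U × V => f q.1 x y z q.2.1 q.2.2)
    (Set.Icc (0 : ℝ) T ×ˢ (Set.univ : Set (U × V)))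
  b_lip : ∀ t ∈ Set.Icc (0 : ℝ) T, ∀ x x' u v, ‖b t x u v - b t x' u v‖ ≤ K * ‖x - x'‖
  σ_lip : ∀ t ∈ Set.Icc (0 : ℝ) T, ∀ x x' u v, ‖σ t x u v - σ t x' u v‖ ≤ K * ‖x - x'‖
  f_lip : ∀ t ∈ Set.Icc (0 : ℝ) T, ∀ x x' y y' z z' u v,
    |f t x y z u v - f t x' y' z' u v| ≤ K * (‖x - x'‖ + |y - y'| + ‖z - z'‖)
  b_growth : ∀ t ∈ Set.Icc (0 : ℝ) T, ∀ x u v, ‖b t x u v‖ ≤ K * (1 + ‖x‖)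
  σ_growth : ∀ t ∈ Set.Icc (0 : ℝ) T, ∀ x u v, ‖σ t x u v‖ ≤ K * (1 + ‖x‖)

variable {n d : ℕ} {U V : Type*} [MetricSpace U] [MetricSpace V]
  {T K : ℝ} {b : ℝ → Eucl n → U → V → Eucl n}
  {σ : ℝ → Eucl n → U → V → Matrix (Fin n) (Fin d) ℝ}
  {f : ℝ → Eucl n → ℝ → Eucl d → U → V → ℝ}

lemma exists_isaacsData [CompactSpace U] [CompactSpace V]
    (hb_cont : ∀ x : Eucl n, ContinuousOn (fun q : ℝ × U × V => b q.1 x q.2.1 q.2.2)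
      (Set.Icc (0 : ℝ) T ×ˢ (Set.univ : Set (U × V))))
    (hσ_cont : ∀ x : Eucl n, ContinuousOn (fun q : ℝ × U × V => σ q.1 x q.2.1 q.2.2)
      (Set.Icc (0 : ℝ) T ×ˢ (Set.univ : Set (U × V))))
    (hbσ_lip : ∃ C > (0 : ℝ), ∀ t ∈ Set.Icc (0 : ℝ) T, ∀ (x x' : Eucl n) (u : U) (v : V),
      ‖b t x u v - b t x' u v‖ + ‖σ t x u v - σ t x' u v‖ ≤ C * ‖x - x'‖)
    (hf_cont : ∀ (x : Eucl n) (y : ℝ) (z : Eucl d), ContinuousOn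
      (fun q : ℝ × U × V => f q.1 x y z q.2.1 q.2.2)
      (Set.Icc (0 : ℝ) T ×ˢ (Set.univ : Set (U × V))))
    (hf_lip : ∃ C > (0 : ℝ), ∀ t ∈ Set.Icc (0 : ℝ) T,
      ∀ (x x' : Eucl n) (y y' : ℝ) (z z' : Eucl d) (u : U) (v : V),
      |f t x y z u v - f t x' y' z' u v| ≤ C * (‖x - x'‖ + |y - y'| + ‖z - z'‖)) :
    ∃ K, IsaacsData T K b σ f := by
  obtain ⟨C₁, hC₁, h₁⟩ := hbσ_lip
  obtain ⟨C₂, hC₂, h₂⟩ := hf_lip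
  have hK : IsCompact (Set.Icc (0 : ℝ) T ×ˢ (Set.univ : Set (U × V))) :=
    isCompact_Icc.prod isCompact_univ
  obtain ⟨C₃, h₃⟩ := hK.exists_bound_of_continuousOn (hb_cont 0)
  obtain ⟨C₄, h₄⟩ := hK.exists_bound_of_continuousOn (hσ_cont 0)
  set K := C₁ + C₂ + |C₃| + |C₄| with hKdef
  have hK1 : C₁ ≤ K := by rw [hKdef]; linarith [abs_nonneg C₃, abs_nonneg C₄]
  have hK2 : C₂ ≤ K := by rw [hKdef]; linarith [abs_nonneg C₃, abs_nonneg C₄]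
  have hK3 : C₃ ≤ K := by rw [hKdef]; linarith [le_abs_self C₃, abs_nonneg C₄]
  have hK4 : C₄ ≤ K := by rw [hKdef]; linarith [le_abs_self C₄, abs_nonneg C₃]
  have hb : ∀ t ∈ Set.Icc (0 : ℝ) T, ∀ x x' u v, ‖b t x u v - b t x' u v‖ ≤ K * ‖x - x'‖ := by
    intro t ht x x' u v
    have h5 := h₁ t ht x x' u v
    have h6 := mul_le_mul_of_nonneg_right hK1 (norm_nonneg (x - x'))
    linarith [norm_nonneg (σ t x u v - σ t x' u v)]
  have hσ : ∀ t ∈ Set.Icc (0 : ℝ) T, ∀ x x' u v, ‖σ t x u v - σ t x' u v‖ ≤ K * ‖x - x'‖ := by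
    intro t ht x x' u v
    have h5 := h₁ t ht x x' u v
    have h6 := mul_le_mul_of_nonneg_right hK1 (norm_nonneg (x - x'))
    linarith [norm_nonneg (b t x u v - b t x' u v)]
  refine ⟨K, by linarith, hb_cont, hσ_cont, hf_cont, hb, hσ, ?_, ?_, ?_⟩
  · intro t ht x x' y y' z z' u v
    exact (h₂ t ht x x' y y' z z' u v).trans
      (mul_le_mul_of_nonneg_right hK2 (by positivity))
  · intro t ht x u v
    have h5 := hb t ht x 0 u v
    have h6 : ‖b t 0 u v‖ ≤ C₃ := h₃ (t, u, v) ⟨ht, trivial⟩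
    have h7 := norm_le_norm_add_norm_sub' (b t x u v) (b t 0 u v)
    rw [sub_zero] at h5
    linarith
  · intro t ht x u v
    have h5 := hσ t ht x 0 u v
    have h6 : ‖σ t 0 u v‖ ≤ C₄ := h₄ (t, u, v) ⟨ht, trivial⟩
    have h7 := norm_le_norm_add_norm_sub' (σ t x u v) (σ t 0 u v)
    rw [sub_zero] at h5
    linarith

/-- The expression whose lower value is the Hamiltonian. -/
def isaacsIntegrand (b : ℝ → Eucl n → U → V → Eucl n)
    (σ : ℝ → Eucl n → U → V → Matrix (Fin n) (Fin d) ℝ)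
    (f : ℝ → Eucl n → ℝ → Eucl d → U → V → ℝ)
    (t : ℝ) (x : Eucl n) (y : ℝ) (p : Eucl n) (X : Matrix (Fin n) (Fin n) ℝ) (u : U) (v : V) : ℝ :=
  (1 / 2) * Matrix.trace (σ t x u v * (σ t x u v)ᵀ * X) + ⟪p, b t x u v⟫
    + f t x y (rowMul p (σ t x u v)) u v

lemma IsaacsData.continuous_integrand (h : IsaacsData T K b σ f) {t : ℝ}
    (ht : t ∈ Set.Icc (0 : ℝ) T) (x : Eucl n) (y : ℝ) (p : Eucl n)
    (X : Matrix (Fin n) (Fin n) ℝ) :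
    Continuous fun q : U × V => isaacsIntegrand b σ f t x y p X q.1 q.2 := by
  have hι : Continuous fun q : U × V => (t, q) := by fun_prop
  have hιm : ∀ q : U × V, (t, q) ∈ Set.Icc (0 : ℝ) T ×ˢ (Set.univ : Set (U × V)) :=
    fun q => ⟨ht, trivial⟩
  have hb : Continuous fun q : U × V => b t x q.1 q.2 :=
    (h.b_cont x).comp_continuous hι hιm
  have hσ : Continuous fun q : U × V => σ t x q.1 q.2 :=
    (h.σ_cont x).comp_continuous hι hιm
  have hr : Continuous fun q : U × V => rowMul p (σ t x q.1 q.2) := by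
    refine (PiLp.continuous_toLp 2 _).comp (continuous_pi fun j => ?_)
    fun_prop
  have hf : Continuous fun q : U × V => f t x y (rowMul p (σ t x q.1 q.2)) q.1 q.2 := by
    have h1 := continuousOn_param (P := Eucl d) (C := K) (F := fun z (q : U × V) =>
      f t x y z q.1 q.2) (S := Set.univ)
      (fun z => ((h.f_cont x y z).comp_continuous hι hιm).continuousOn) (fun q _ z z' => by
        have := h.f_lip t ht x x y y z z' q.1 q.2
        simpa [dist_eq_norm] using this)
    exact h1.comp_continuous (hr.prodMk continuous_id) fun q => ⟨trivial, trivial⟩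
  unfold isaacsIntegrand
  exact ((continuous_const.mul (((hσ.matrix_mul hσ.matrix_transpose).matrix_mul
    continuous_const).matrix_trace)).add (continuous_const.inner hb)).add hf

set_option maxHeartbeats 1000000 in
/-- Comparison of the Hamiltonian at the two points of a doubled maximum. -/
lemma IsaacsData.hamiltonian_sub_le [CompactSpace U] [CompactSpace V] [Nonempty U]
    [Nonempty V] (h : IsaacsData T K b σ f)
    {R t s τ α e η γ : ℝ} {x y p q q' D : Eucl n} {M N₁ N₂ : Eucl n →L[ℝ] Eucl n}
    (ht : t ∈ Set.Icc (0 : ℝ) T) (hs : s ∈ Set.Icc (0 : ℝ) T) (hx : ‖x‖ ≤ R) (hy : ‖y‖ ≤ R)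
    (hη : 0 < η) (he : 0 < e) (hp : ‖p‖ ≤ ‖x - y‖ / e)
    (hq : ‖q‖ ≤ η) (hq' : ‖q'‖ ≤ η)
    (hN : ∀ h k, ⟪N₁ h, h⟫ + ⟪N₂ k, k⟫ ≤ ‖h - k‖ ^ 2 / e + η * (‖h‖ ^ 2 + ‖k‖ ^ 2))
    (hbar : ∀ u v, τ + 1 / 2 * ∑ k, ⟪M (colVec (σ t x u v) k), colVec (σ t x u v) k⟫
      + ⟪D, b t x u v⟫ + K * ‖rowMul D (σ t x u v)‖ ≤ -α)
    (hb : ∀ u v, ‖b t x u v - b s x u v‖ ≤ γ) (hσ : ∀ u v, ‖σ t x u v - σ s x u v‖ ≤ γ)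
    (hf : ∀ z : Eucl d, ‖z‖ ≤ ‖x - y‖ / e * (K * (1 + R)) → ∀ u v,
      |f t x 0 z u v - f s x 0 z u v| ≤ γ) :
    τ + (lowerHamiltonian b σ f t x 0 (D + (p + q)) (opMatrix (M + N₁)) -
      lowerHamiltonian b σ f s y 0 (p + q') (-opMatrix N₂)) ≤
      -α + (γ + K * ‖x - y‖) ^ 2 / (2 * e) + η * (K * (1 + R)) ^ 2
        + (1 + K) * (‖x - y‖ / e * (γ + K * ‖x - y‖)) + 2 * η * (1 + K) * (K * (1 + R))
        + γ + K * ‖x - y‖ + η := by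
  obtain ⟨u, v, huv⟩ := exists_isaacs_value_sub_le
    (h.continuous_integrand ht x 0 (D + (p + q)) (opMatrix (M + N₁)))
    (h.continuous_integrand hs y 0 (p + q') (-opMatrix N₂)) hη
  have hK := h.pos
  set X := ‖x - y‖ with hX
  have hX0 : 0 ≤ X := norm_nonneg _
  have hR : 0 ≤ R := (norm_nonneg _).trans hx
  set Γ := K * (1 + R) with hΓ
  have hΓ0 : 0 ≤ Γ := by positivity
  have hσ₁ : ‖σ t x u v‖ ≤ Γ := (h.σ_growth t ht x u v).trans (by rw [hΓ]; gcongr)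
  have hσ₂ : ‖σ s y u v‖ ≤ Γ := (h.σ_growth s hs y u v).trans (by rw [hΓ]; gcongr)
  have hb₁ : ‖b t x u v‖ ≤ Γ := (h.b_growth t ht x u v).trans (by rw [hΓ]; gcongr)
  have hb₂ : ‖b s y u v‖ ≤ Γ := (h.b_growth s hs y u v).trans (by rw [hΓ]; gcongr)
  have hσd : ‖σ t x u v - σ s y u v‖ ≤ γ + K * X :=
    (norm_sub_le_norm_sub_add_norm_sub _ (σ s x u v) _).trans
      (add_le_add (hσ u v) (h.σ_lip s hs x y u v))
  have hbd : ‖b t x u v - b s y u v‖ ≤ γ + K * X :=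
    (norm_sub_le_norm_sub_add_norm_sub _ (b s x u v) _).trans
      (add_le_add (hb u v) (h.b_lip s hs x y u v))
  have hbar := hbar u v
  have hf₀ := (abs_le.mp (h.f_lip t ht x x 0 0 (rowMul (D + (p + q)) (σ t x u v))
    (rowMul p (σ t x u v)) u v)).2
  have hpσ : ‖rowMul p (σ t x u v)‖ ≤ X / e * Γ :=
    (norm_rowMul_le _ _).trans (mul_le_mul hp hσ₁ (norm_nonneg _) (by positivity))
  have hf₁ := (abs_le.mp (hf (rowMul p (σ t x u v)) hpσ u v)).2
  have hf₂ := (abs_le.mp (h.f_lip s hs x y 0 0 (rowMul p (σ t x u v))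
    (rowMul (p + q') (σ s y u v)) u v)).2
  have hz₁ : ‖rowMul (D + (p + q)) (σ t x u v) - rowMul p (σ t x u v)‖ ≤
      ‖rowMul D (σ t x u v)‖ + η * Γ := by
    have e1 : rowMul (D + (p + q)) (σ t x u v) - rowMul p (σ t x u v) =
        rowMul D (σ t x u v) - rowMul (-q) (σ t x u v) := by
      rw [← rowMul_sub_left, ← rowMul_sub_left]; congr 1; abel
    rw [e1]
    refine (norm_sub_le _ _).trans (add_le_add le_rfl ((norm_rowMul_le _ _).trans ?_))
    rw [norm_neg]
    exact mul_le_mul hq hσ₁ (norm_nonneg _) hη.le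
  have hz₂ : ‖rowMul p (σ t x u v) - rowMul (p + q') (σ s y u v)‖ ≤
      X / e * (γ + K * X) + η * Γ := by
    have e1 : rowMul p (σ t x u v) - rowMul (p + q') (σ s y u v) =
        rowMul p (σ t x u v - σ s y u v) + rowMul (-q') (σ s y u v) := by
      have : rowMul (-q') (σ s y u v) = rowMul p (σ s y u v) - rowMul (p + q') (σ s y u v) := by
        rw [← rowMul_sub_left]; congr 1; abel
      rw [rowMul_sub_right, this]; abel
    rw [e1]
    refine (norm_add_le _ _).trans (add_le_add ?_ ?_)
    · exact (norm_rowMul_le _ _).trans (mul_le_mul hp hσd (norm_nonneg _) (by positivity))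
    · refine (norm_rowMul_le _ _).trans ?_
      rw [norm_neg]
      exact mul_le_mul hq' hσ₂ (norm_nonneg _) hη.le
  have htr : 1 / 2 * Matrix.trace (σ t x u v * (σ t x u v)ᵀ * opMatrix (M + N₁)) -
      1 / 2 * Matrix.trace (σ s y u v * (σ s y u v)ᵀ * -opMatrix N₂) ≤
      1 / 2 * ∑ k, ⟪M (colVec (σ t x u v) k), colVec (σ t x u v) k⟫ +
        (γ + K * X) ^ 2 / (2 * e) + η * Γ ^ 2 := by
    rw [Matrix.mul_neg, Matrix.trace_neg, trace_mul_opMatrix, trace_mul_opMatrix]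
    simp only [_root_.add_apply, inner_add_left, Finset.sum_add_distrib]
    have h1 : ∑ k, (⟪N₁ (colVec (σ t x u v) k), colVec (σ t x u v) k⟫ +
        ⟪N₂ (colVec (σ s y u v) k), colVec (σ s y u v) k⟫) ≤
        ‖σ t x u v - σ s y u v‖ ^ 2 / e + η * (‖σ t x u v‖ ^ 2 + ‖σ s y u v‖ ^ 2) := by
      rw [← sum_norm_colVec_sq, ← sum_norm_colVec_sq, ← sum_norm_colVec_sq, Finset.sum_div,
        ← Finset.sum_add_distrib, Finset.mul_sum, ← Finset.sum_add_distrib]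
      exact Finset.sum_le_sum fun k _ => hN _ _
    rw [Finset.sum_add_distrib] at h1
    have h2 : ‖σ t x u v - σ s y u v‖ ^ 2 / e ≤ (γ + K * X) ^ 2 / e := by gcongr
    have h3 : η * (‖σ t x u v‖ ^ 2 + ‖σ s y u v‖ ^ 2) ≤ η * (Γ ^ 2 + Γ ^ 2) := by gcongr
    have h4 : (γ + K * X) ^ 2 / (2 * e) = (γ + K * X) ^ 2 / e / 2 := by
      rw [div_div, mul_comm e 2]
    rw [h4]
    linarith
  have hin : ⟪D + (p + q), b t x u v⟫ - ⟪p + q', b s y u v⟫ ≤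
      ⟪D, b t x u v⟫ + X / e * (γ + K * X) + 2 * η * Γ := by
    have e1 : ⟪D + (p + q), b t x u v⟫ - ⟪p + q', b s y u v⟫ = ⟪D, b t x u v⟫ +
        ⟪p, b t x u v - b s y u v⟫ + ⟪q, b t x u v⟫ + ⟪-q', b s y u v⟫ := by
      rw [inner_add_left, inner_add_left, inner_add_left, inner_sub_right, inner_neg_left]; ring
    have h1 := (real_inner_le_norm p (b t x u v - b s y u v)).trans
      (mul_le_mul hp hbd (norm_nonneg _) (by positivity))
    have h2 := (real_inner_le_norm q (b t x u v)).trans (mul_le_mul hq hb₁ (norm_nonneg _) hη.le)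
    have h3 : ⟪-q', b s y u v⟫ ≤ η * Γ := (real_inner_le_norm _ _).trans
      (by rw [norm_neg]; exact mul_le_mul hq' hb₂ (norm_nonneg _) hη.le)
    rw [e1]
    linarith
  have hz₁' := mul_le_mul_of_nonneg_left hz₁ hK.le
  have hz₂' := mul_le_mul_of_nonneg_left hz₂ hK.le
  rw [sub_self, norm_zero, sub_self, abs_zero, zero_add, zero_add] at hf₀
  rw [sub_self, abs_zero, add_zero, ← hX] at hf₂
  change lowerHamiltonian b σ f t x 0 _ _ - lowerHamiltonian b σ f s y 0 _ _ ≤ _ at huv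
  unfold isaacsIntegrand at huv
  linarith

end Hamiltonian

section Barrier

open Filter Topology

variable {n d : ℕ}

/-- The growth function `x ↦ log √(1 + |x|²) + 1`. -/
def logWeight (x : Eucl n) : ℝ := Real.log (1 + ‖x‖ ^ 2) / 2 + 1

/-- The barrier `exp((log √(1 + |x|²) + 1)² / (c (t - a)))`, which blows up as `t ↓ a`. -/
def barrier (c a : ℝ) (t : ℝ) (x : Eucl n) : ℝ :=
  Real.exp ((c * (t - a))⁻¹ * logWeight x ^ 2)

lemma one_le_logWeight (x : Eucl n) : 1 ≤ logWeight x := by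
  have := Real.log_nonneg (x := 1 + ‖x‖ ^ 2) (by nlinarith [sq_nonneg ‖x‖])
  unfold logWeight
  linarith

lemma contDiff_logWeight : ContDiff ℝ 3 (logWeight : Eucl n → ℝ) := by
  refine ContDiff.add (ContDiff.div_const (ContDiff.log ?_ fun x => ?_) 2) contDiff_const
  · exact contDiff_const.add (contDiff_norm_sq ℝ)
  · positivity

lemma contDiffAt_barrier {c a t : ℝ} (hc : 0 < c) (ht : a < t) (x : Eucl n) :
    ContDiffAt ℝ 3 (fun p : ℝ × Eucl n => barrier c a p.1 p.2) (t, x) := by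
  have h1 : c * (t - a) ≠ 0 := (mul_pos hc (sub_pos.mpr ht)).ne'
  have h2 : ContDiffAt ℝ 3 (fun p : ℝ × Eucl n => (c * (p.1 - a))⁻¹) (t, x) :=
    (contDiffAt_const.mul (contDiffAt_fst.sub contDiffAt_const)).inv h1
  have h3 : ContDiffAt ℝ 3 (fun p : ℝ × Eucl n => logWeight p.2) (t, x) :=
    contDiff_logWeight.contDiffAt.comp (t, x) contDiffAt_snd
  exact (h2.mul (h3.pow 2)).exp

lemma hasDerivAt_barrier {c a t : ℝ} (hc : 0 < c) (ht : a < t) (x : Eucl n) :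
    HasDerivAt (fun s => barrier c a s x)
      (-(c * (c * (t - a))⁻¹ ^ 2 * logWeight x ^ 2 * barrier c a t x)) t := by
  have h1 : c * (t - a) ≠ 0 := (mul_pos hc (sub_pos.mpr ht)).ne'
  have h2 : HasDerivAt (fun s => c * (s - a)) (c * 1) t :=
    ((hasDerivAt_id t).sub_const a).const_mul c
  refine (((h2.inv h1).mul_const (logWeight x ^ 2)).exp).congr_deriv ?_
  simp only [Pi.inv_apply]
  unfold barrier
  field_simp

/-- The radial profile of the gradient of `x ↦ exp(m (log √(1 + |x|²) + 1)²)`. -/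
def radialProfile (m r : ℝ) : ℝ :=
  2 * m * Real.exp (m * (Real.log (1 + r) / 2 + 1) ^ 2) * (Real.log (1 + r) / 2 + 1) / (1 + r)

lemma hasGradientAt_barrier (c a t : ℝ) (x : Eucl n) :
    HasGradientAt (barrier c a t) (radialProfile (c * (t - a))⁻¹ (‖x‖ ^ 2) • x) x := by
  rw [hasGradientAt_iff_hasFDerivAt]
  have h0 : (1 + ‖x‖ ^ 2) ≠ 0 := by positivity
  have h1 : HasFDerivAt (fun y : Eucl n => ‖y‖ ^ 2) (2 • innerSL ℝ x) x :=
    (hasStrictFDerivAt_norm_sq x).hasFDerivAt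
  have h2 := (((((h1.const_add 1).log h0).mul_const (1 / 2 : ℝ)).add_const 1).pow 2).const_mul
    (c * (t - a))⁻¹
  refine (h2.exp.congr_fderiv ?_).congr_of_eventuallyEq ?_
  · ext h
    simp only [_root_.smul_apply, InnerProductSpace.toDual_apply_apply, innerSL_apply_apply,
      smul_eq_mul, real_inner_smul_left, radialProfile, nsmul_eq_mul]
    field_simp
    push_cast
    ring
  · exact Eventually.of_forall fun y => by simp only [barrier, logWeight]; ring_nf

lemma hasDerivAt_radialProfile (m : ℝ) {r : ℝ} (hr : 0 ≤ r) :
    HasDerivAt (radialProfile m)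
      (2 * m * Real.exp (m * (Real.log (1 + r) / 2 + 1) ^ 2) / (1 + r) ^ 2 *
        (m * (Real.log (1 + r) / 2 + 1) ^ 2 + 1 / 2 - (Real.log (1 + r) / 2 + 1))) r := by
  have h0 : 1 + r ≠ 0 := by positivity
  have h1 : HasDerivAt (fun r : ℝ => 1 + r) 1 r := (hasDerivAt_id r).const_add 1
  have h2 : HasDerivAt (fun r : ℝ => Real.log (1 + r) / 2 + 1) (1 / (1 + r) / 2) r :=
    ((h1.log h0).div_const 2).add_const 1
  have h3 := (((h2.pow 2).const_mul m).exp.const_mul (2 * m)).mul h2 |>.div h1 h0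
  refine h3.congr_deriv ?_
  simp only [Pi.pow_apply, Pi.mul_apply]
  field_simp
  ring

lemma hasFDerivAt_smul_radial {g : ℝ → ℝ} {g' : ℝ} {x : Eucl n}
    (hg : HasDerivAt g g' (‖x‖ ^ 2)) :
    HasFDerivAt (fun y : Eucl n => g (‖y‖ ^ 2) • y)
      (g (‖x‖ ^ 2) • ContinuousLinearMap.id ℝ (Eucl n) +
        (2 * g') • (innerSL ℝ x).smulRight x) x := by
  have h1 : HasFDerivAt (fun y : Eucl n => ‖y‖ ^ 2) (2 • innerSL ℝ x) x :=
    (hasStrictFDerivAt_norm_sq x).hasFDerivAt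
  refine ((hg.comp_hasFDerivAt x h1).smul (hasFDerivAt_id x)).congr_fderiv ?_
  ext1 h
  simp only [_root_.add_apply, _root_.smul_apply, ContinuousLinearMap.smulRight_apply,
    innerSL_apply_apply, ContinuousLinearMap.id_apply, id_eq, smul_smul, smul_eq_mul,
    Function.comp_apply, nsmul_eq_mul]
  push_cast
  ring_nf

end Barrier

section BarrierEstimate

open Filter Topology

variable {n d : ℕ} {U V : Type*} [MetricSpace U] [MetricSpace V]
  {T K : ℝ} {b : ℝ → Eucl n → U → V → Eucl n}
  {σ : ℝ → Eucl n → U → V → Matrix (Fin n) (Fin d) ℝ}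
  {f : ℝ → Eucl n → ℝ → Eucl d → U → V → ℝ}

lemma one_add_norm_sq_le (x : Eucl n) : (1 + ‖x‖) ^ 2 ≤ 2 * (1 + ‖x‖ ^ 2) := by
  nlinarith [sq_nonneg (1 - ‖x‖)]

set_option maxHeartbeats 1000000 in
/-- The barrier is a strict supersolution of the linearized extremal equation. -/
lemma IsaacsData.exists_barrier_derivatives (h : IsaacsData T K b σ f) {a t α : ℝ}
    (ht : t ∈ Set.Icc (0 : ℝ) T) (hat : a < t)
    (hμ : (10 * K ^ 2 + 4 * K + 1) * (t - a) ≤ 1) (hα : 0 < α) (x : Eucl n) :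
    ∃ (τ : ℝ) (D : Eucl n → Eucl n) (M : Eucl n →L[ℝ] Eucl n),
      HasDerivAt (fun s => α * barrier (10 * K ^ 2 + 4 * K + 1) a s x) τ t ∧
      (∀ y, HasGradientAt (fun y => α * barrier (10 * K ^ 2 + 4 * K + 1) a t y) (D y) y) ∧
      HasFDerivAt D M x ∧ ∀ u v,
        τ + 1 / 2 * ∑ k, ⟪M (colVec (σ t x u v) k), colVec (σ t x u v) k⟫
          + ⟪D x, b t x u v⟫ + K * ‖rowMul (D x) (σ t x u v)‖ ≤ -α := by
  have hK := h.pos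
  set c := 10 * K ^ 2 + 4 * K + 1 with hc
  have hc0 : 0 < c := by positivity
  set m := (c * (t - a))⁻¹ with hm
  have hm1 : 1 ≤ m := by
    rw [hm]; exact (one_le_inv₀ (mul_pos hc0 (sub_pos.mpr hat))).mpr hμ
  have hm0 : 0 < m := by linarith
  have hL := one_le_logWeight x
  set L := logWeight x with hLdef
  set r := ‖x‖ ^ 2 with hr
  have hr0 : 0 ≤ r := by positivity
  have hL' : Real.log (1 + r) / 2 + 1 = L := rfl
  set E := barrier c a t x with hE
  have hE' : Real.exp (m * (Real.log (1 + r) / 2 + 1) ^ 2) = E := rfl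
  have hE1 : 1 ≤ E := Real.one_le_exp (by positivity)
  have hg := hasDerivAt_radialProfile m hr0
  have hG : radialProfile m r = 2 * m * E * L / (1 + r) := rfl
  set G' := 2 * m * Real.exp (m * (Real.log (1 + r) / 2 + 1) ^ 2) / (1 + r) ^ 2 *
        (m * (Real.log (1 + r) / 2 + 1) ^ 2 + 1 / 2 - (Real.log (1 + r) / 2 + 1)) with hG'
  have hmL : 1 ≤ m * L := by nlinarith
  set P := m ^ 2 * L ^ 2 * E with hP
  have hP1 : 1 ≤ P := by
    have : 1 ≤ m ^ 2 * L ^ 2 := by rw [← mul_pow]; exact one_le_pow₀ hmL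
    rw [hP]; nlinarith
  have hmLE : m * E * L ≤ P := by
    have h1 : m * L * 1 ≤ m * L * (m * L) := by gcongr
    have h2 : m * L * 1 * E ≤ m * L * (m * L) * E := by gcongr
    rw [hP]; linarith
  have hGle : radialProfile m r ≤ 2 * P / (1 + r) := by
    rw [hG]; gcongr ?_ / _; linarith
  have hG0 : 0 ≤ radialProfile m r := by rw [hG]; positivity
  have hG'le : G' ≤ 2 * P / (1 + r) ^ 2 := by
    rw [hG', hE', hL', hP]
    have : m * L ^ 2 + 1 / 2 - L ≤ m * L ^ 2 := by linarith
    calc 2 * m * E / (1 + r) ^ 2 * (m * L ^ 2 + 1 / 2 - L)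
        ≤ 2 * m * E / (1 + r) ^ 2 * (m * L ^ 2) := by gcongr
      _ = _ := by ring
  refine ⟨α * -(c * m ^ 2 * L ^ 2 * E), fun y => α • (radialProfile m (‖y‖ ^ 2) • y),
    α • (radialProfile m r • ContinuousLinearMap.id ℝ (Eucl n) +
        (2 * G') • (innerSL ℝ x).smulRight x), (hasDerivAt_barrier hc0 hat x).const_mul α,
    fun y => ?_, (hasFDerivAt_smul_radial hg).const_smul α, fun u v => ?_⟩
  · have := hasGradientAt_barrier c a t y
    rw [hasGradientAt_iff_hasFDerivAt] at this ⊢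
    refine (this.const_mul α).congr_fderiv ?_
    simp [m]
  · have hx2 := one_add_norm_sq_le x
    have hσ := h.σ_growth t ht x u v
    have hb := h.b_growth t ht x u v
    have hσ2 : ‖σ t x u v‖ ^ 2 ≤ 2 * K ^ 2 * (1 + r) :=
      (pow_le_pow_left₀ (norm_nonneg _) hσ 2).trans (by rw [mul_pow]; nlinarith [sq_nonneg K])
    have hq : ∀ s : Eucl n, radialProfile m r * ‖s‖ ^ 2 + 2 * G' * ⟪x, s⟫ ^ 2 ≤
        6 * P / (1 + r) * ‖s‖ ^ 2 := by
      intro s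
      have h1 : ⟪x, s⟫ ^ 2 ≤ r * ‖s‖ ^ 2 := by
        rw [hr, ← mul_pow, ← sq_abs]
        exact pow_le_pow_left₀ (abs_nonneg _) (abs_real_inner_le_norm x s) 2
      have h2 : 2 * G' * ⟪x, s⟫ ^ 2 ≤ 2 * (2 * P / (1 + r) ^ 2) * ((1 + r) * ‖s‖ ^ 2) := by
        refine (mul_le_mul_of_nonneg_right (mul_le_mul_of_nonneg_left hG'le two_pos.le)
          (sq_nonneg _)).trans (mul_le_mul_of_nonneg_left (h1.trans ?_) (by positivity))
        gcongr; linarith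
      have h3 : 2 * (2 * P / (1 + r) ^ 2) * ((1 + r) * ‖s‖ ^ 2) = 4 * P / (1 + r) * ‖s‖ ^ 2 := by
        field_simp; ring
      have h4 : radialProfile m r * ‖s‖ ^ 2 ≤ 2 * P / (1 + r) * ‖s‖ ^ 2 := by gcongr
      have h5 : 6 * P / (1 + r) * ‖s‖ ^ 2 =
        2 * P / (1 + r) * ‖s‖ ^ 2 + 4 * P / (1 + r) * ‖s‖ ^ 2 := by ring
      linarith
    have hsum : ∑ k, ⟪(α • (radialProfile m r • ContinuousLinearMap.id ℝ (Eucl n) +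
        (2 * G') • (innerSL ℝ x).smulRight x)) (colVec (σ t x u v) k), colVec (σ t x u v) k⟫ ≤
        α * (12 * K ^ 2 * P) := by
      have h1 : ∀ s : Eucl n, ⟪(α • (radialProfile m r • ContinuousLinearMap.id ℝ (Eucl n) +
        (2 * G') • (innerSL ℝ x).smulRight x)) s, s⟫ ≤ α * (6 * P / (1 + r) * ‖s‖ ^ 2) := by
        intro s
        refine le_trans (le_of_eq ?_) (mul_le_mul_of_nonneg_left (hq s) hα.le)
        simp only [_root_.add_apply, _root_.smul_apply, ContinuousLinearMap.smulRight_apply,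
          innerSL_apply_apply, ContinuousLinearMap.id_apply, inner_add_left,
          real_inner_smul_left, real_inner_self_eq_norm_sq]
        ring
      refine (Finset.sum_le_sum fun k _ => h1 _).trans ?_
      rw [← Finset.mul_sum, ← Finset.mul_sum, sum_norm_colVec_sq]
      refine mul_le_mul_of_nonneg_left ((mul_le_mul_of_nonneg_left hσ2 (by positivity)).trans
        (le_of_eq ?_)) hα.le
      field_simp
      ring
    have hD : ‖radialProfile m r • x‖ * (1 + ‖x‖) ≤ 4 * P := by
      rw [norm_smul, Real.norm_of_nonneg hG0]
      have h1 : ‖x‖ * (1 + ‖x‖) ≤ 2 * (1 + r) := by nlinarith [norm_nonneg x]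
      calc radialProfile m r * ‖x‖ * (1 + ‖x‖) = radialProfile m r * (‖x‖ * (1 + ‖x‖)) := by ring
        _ ≤ 2 * P / (1 + r) * (2 * (1 + r)) := by gcongr
        _ = 4 * P := by field_simp; ring
    have hDα : ‖α • (radialProfile m r • x)‖ = α * ‖radialProfile m r • x‖ := by
      rw [norm_smul, Real.norm_of_nonneg hα.le]
    have hin : ⟪α • (radialProfile m r • x), b t x u v⟫ ≤ α * (4 * K * P) := by
      refine (real_inner_le_norm _ _).trans ?_
      rw [hDα]
      have h1 : ‖radialProfile m r • x‖ * ‖b t x u v‖ ≤ 4 * K * P := by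
        refine (mul_le_mul_of_nonneg_left hb (norm_nonneg _)).trans ?_
        nlinarith
      rw [mul_assoc]
      exact mul_le_mul_of_nonneg_left h1 hα.le
    have hrow : K * ‖rowMul (α • (radialProfile m r • x)) (σ t x u v)‖ ≤ α * (4 * K ^ 2 * P) := by
      refine (mul_le_mul_of_nonneg_left (norm_rowMul_le _ _) hK.le).trans ?_
      rw [hDα]
      have h1 : ‖radialProfile m r • x‖ * ‖σ t x u v‖ ≤ 4 * K * P := by
        refine (mul_le_mul_of_nonneg_left hσ (norm_nonneg _)).trans ?_
        nlinarith
      have h2 := mul_le_mul_of_nonneg_left h1 (mul_pos hK hα).le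
      linarith
    have hfin : α * 1 ≤ α * P := by gcongr
    have hcP : α * -(c * m ^ 2 * L ^ 2 * E) = -(α * (c * P)) := by rw [hP]; ring
    rw [hcP, hc]
    linarith

/-- The barrier dominates the growth allowed in the class `Θ`. -/
lemma exp_le_barrier {c a t A : ℝ} (hA : A ≤ (c * (t - a))⁻¹) (hA0 : 0 ≤ A) (x : Eucl n) :
    Real.exp (A * Real.log ((‖x‖ ^ 2 + 1) ^ ((1 : ℝ) / 2)) ^ 2) ≤ barrier c a t x := by
  refine Real.exp_le_exp.mpr (mul_le_mul hA ?_ (sq_nonneg _) (hA0.trans hA))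
  have h1 : Real.log ((‖x‖ ^ 2 + 1) ^ ((1 : ℝ) / 2)) = Real.log (1 + ‖x‖ ^ 2) / 2 := by
    rw [Real.log_rpow (by positivity), add_comm]; ring
  have h2 : 0 ≤ Real.log (1 + ‖x‖ ^ 2) := Real.log_nonneg (by nlinarith [sq_nonneg ‖x‖])
  rw [h1]
  refine pow_le_pow_left₀ (by positivity) ?_ 2
  unfold logWeight
  linarith

lemma inv_le_barrier {c a t : ℝ} (h : 0 ≤ (c * (t - a))⁻¹) (x : Eucl n) :
    (c * (t - a))⁻¹ ≤ barrier c a t x := by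
  have h1 : (1 : ℝ) ≤ logWeight x ^ 2 := one_le_pow₀ (one_le_logWeight x)
  have h2 := Real.add_one_le_exp ((c * (t - a))⁻¹ * logWeight x ^ 2)
  unfold barrier
  nlinarith

end BarrierEstimate

section Localization

open Filter Topology

variable {n d : ℕ} {U V : Type*} [MetricSpace U] [MetricSpace V]
  {T K : ℝ} {b : ℝ → Eucl n → U → V → Eucl n}
  {σ : ℝ → Eucl n → U → V → Matrix (Fin n) (Fin d) ℝ}
  {f : ℝ → Eucl n → ℝ → Eucl d → U → V → ℝ}

/-- The anisotropic penalization operator `(t, x) ↦ (t / δ, x / e)`. -/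
lemma exists_penalization (n : ℕ) (δ e : ℝ) :
    ∃ A : WithLp 2 (ℝ × Eucl n) →L[ℝ] WithLp 2 (ℝ × Eucl n),
      ∀ z, A z = WithLp.toLp 2 (δ⁻¹ * z.fst, e⁻¹ • z.snd) := by
  let L : WithLp 2 (ℝ × Eucl n) →ₗ[ℝ] WithLp 2 (ℝ × Eucl n) :=
    { toFun := fun z => WithLp.toLp 2 (δ⁻¹ * z.fst, e⁻¹ • z.snd)
      map_add' := fun z w => by
        apply (WithLp.equiv 2 _).injective
        simp [mul_add]
      map_smul' := fun c z => by
        apply (WithLp.equiv 2 _).injective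
        simp only [WithLp.smul_fst, WithLp.smul_snd, smul_eq_mul, mul_left_comm δ⁻¹ c,
          smul_comm e⁻¹ c, RingHom.id_apply]
        rfl }
  exact ⟨LinearMap.toContinuousLinearMap L, fun z => rfl⟩

/-- Approximate maximum points of the doubled functional together with their second order jets,
localized near the positivity set of `u + v`. -/
lemma exists_localized_doubling {S : Set (WithLp 2 (ℝ × Eucl n))} (hS : IsCompact S)
    {u v : WithLp 2 (ℝ × Eucl n) → ℝ} (hu : ContinuousOn u S) (hv : ContinuousOn v S)
    {z₀ : WithLp 2 (ℝ × Eucl n)} (hz₀ : z₀ ∈ S) (hpos : 0 < u z₀ + v z₀) {κ : ℝ} (hκ : 0 < κ) :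
    ∃ r > 0, ∀ e δ η : ℝ, 0 < e → 0 < δ → 0 < η → e ≤ r → δ ≤ r → η ≤ r →
      ∃ z ∈ S, ∃ w ∈ S, ∃ a₁ a₂ : WithLp 2 (ℝ × Eucl n),
      ∃ B₁ B₂ : WithLp 2 (ℝ × Eucl n) →L[ℝ] WithLp 2 (ℝ × Eucl n),
        0 < u z + v z ∧ 0 < u w + v w ∧
        (z.fst - w.fst) ^ 2 / δ + ‖z.snd - w.snd‖ ^ 2 / e ≤ κ ∧
        HasUpperJet S u z a₁ B₁ ∧ HasUpperJet S v w a₂ B₂ ∧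
        |a₁.fst + a₂.fst| ≤ 2 * η ∧ ‖a₁.snd - e⁻¹ • (z.snd - w.snd)‖ ≤ η ∧
        ‖-a₂.snd - e⁻¹ • (z.snd - w.snd)‖ ≤ η ∧
        ∀ h k : Eucl n, ⟪B₁ (WithLp.toLp 2 (0, h)), WithLp.toLp 2 (0, h)⟫ +
          ⟪B₂ (WithLp.toLp 2 (0, k)), WithLp.toLp 2 (0, k)⟫ ≤ ‖h - k‖ ^ 2 / e := by
  set m := u z₀ + v z₀ with hm
  obtain ⟨N₁, hN₁⟩ := hS.exists_bound_of_continuousOn hu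
  obtain ⟨N₂, hN₂⟩ := hS.exists_bound_of_continuousOn hv
  set N := |N₁| + |N₂| with hN
  have hN0 : 0 ≤ N := by positivity
  set κ' := min (m / 4) (κ / 4) with hκ'
  have hκ'0 : 0 < κ' := by positivity
  obtain ⟨ρ₁, hρ₁, hu'⟩ := Metric.uniformContinuousOn_iff.mp
    (hS.uniformContinuousOn_of_continuous hu) κ' hκ'0
  obtain ⟨ρ₂, hρ₂, hv'⟩ := Metric.uniformContinuousOn_iff.mp
    (hS.uniformContinuousOn_of_continuous hv) κ' hκ'0
  set ρ := min ρ₁ ρ₂ with hρ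
  have hρ0 : 0 < ρ := lt_min hρ₁ hρ₂
  refine ⟨min (min 1 κ') (ρ ^ 2 / (4 * (2 * N + 2))), by positivity,
    fun e δ η he hδ hη her hδr hηr => ?_⟩
  have hη1 : η ≤ 1 := hηr.trans ((min_le_left _ _).trans (min_le_left _ _))
  have hηκ : η ≤ κ' := hηr.trans ((min_le_left _ _).trans (min_le_right _ _))
  have her : e ≤ ρ ^ 2 / (4 * (2 * N + 2)) := her.trans (min_le_right _ _)
  have hδr : δ ≤ ρ ^ 2 / (4 * (2 * N + 2)) := hδr.trans (min_le_right _ _)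
  rw [le_div_iff₀ (by positivity)] at her hδr
  have hκ'm : κ' ≤ m / 4 := min_le_left _ _
  have hκ'κ : κ' ≤ κ / 4 := min_le_right _ _
  obtain ⟨A, hA⟩ := exists_penalization n δ e
  have hAin : ∀ z w, ⟪A z, w⟫ = δ⁻¹ * (z.fst * w.fst) + e⁻¹ * ⟪z.snd, w.snd⟫ := by
    intro z w
    rw [hA, WithLp.prod_inner_apply]
    simp [real_inner_smul_left]
    ring
  have hAq : ∀ z, ⟪A z, z⟫ = z.fst ^ 2 / δ + ‖z.snd‖ ^ 2 / e := by
    intro z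
    rw [hAin, real_inner_self_eq_norm_sq]
    field_simp
  obtain ⟨z, hz, w, hw, a₁, a₂, B₁, B₂, hmax, hj₁, hj₂, ha₁, ha₂, hB⟩ :=
    exists_doubling_jets hS ⟨z₀, hz₀⟩ hu hv A
      (fun h k => by
        rw [hAin, real_inner_comm (A k) h, hAin, real_inner_comm h.snd, mul_comm h.fst])
      (fun h => by rw [hAq]; positivity) hη
  have hQ := hAq (z - w)
  set Q := ⟪A (z - w), z - w⟫ with hQdef
  have hzw₁ : (z - w).fst = z.fst - w.fst := rfl
  have hzw₂ : (z - w).snd = z.snd - w.snd := rfl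
  rw [hzw₁, hzw₂] at hQ
  have hmax₀ := hmax z₀ hz₀ z₀ hz₀
  have hmaxz := hmax z hz z hz
  simp only [sub_self, map_zero, inner_zero_left, zero_div, sub_zero] at hmax₀ hmaxz
  have hub : u z ≤ |N₁| := (le_abs_self _).trans ((hN₁ z hz).trans (le_abs_self _))
  have hvb : v w ≤ |N₂| := (le_abs_self _).trans ((hN₂ w hw).trans (le_abs_self _))
  have hQN : Q ≤ 2 * N + 2 := by linarith
  have hd1 : 0 ≤ (z.fst - w.fst) ^ 2 / δ := by positivity
  have hd2 : 0 ≤ ‖z.snd - w.snd‖ ^ 2 / e := by positivity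
  have hQ0 : 0 ≤ Q := by rw [hQ]; positivity
  have hdist : dist z w < ρ := by
    have h1 : ‖z - w‖ ^ 2 = (z.fst - w.fst) ^ 2 + ‖z.snd - w.snd‖ ^ 2 := by
      rw [WithLp.prod_norm_sq_eq_of_L2, hzw₁, hzw₂, Real.norm_eq_abs, sq_abs]
    have h2 : (z.fst - w.fst) ^ 2 ≤ Q * δ := (div_le_iff₀ hδ).mp (by linarith)
    have h3 : ‖z.snd - w.snd‖ ^ 2 ≤ Q * e := (div_le_iff₀ he).mp (by linarith)
    have h4 : Q * δ ≤ (2 * N + 2) * δ := by gcongr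
    have h5 : Q * e ≤ (2 * N + 2) * e := by gcongr
    rw [dist_eq_norm]
    refine lt_of_pow_lt_pow_left₀ 2 hρ0.le ?_
    nlinarith [sq_nonneg ρ, pow_pos hρ0 2]
  have huzw := abs_lt.mp (hu' z hz w hw (hdist.trans_le (min_le_left _ _)))
  have hvzw := abs_lt.mp (hv' z hz w hw (hdist.trans_le (min_le_right _ _)))
  have hc₁ : |a₁.fst - δ⁻¹ * (z.fst - w.fst)| ≤ η := by
    have := (WithLp.norm_fst_le _ (a₁ - A (z - w))).trans ha₁
    rwa [hA] at this
  have hc₂ : |a₂.fst + δ⁻¹ * (z.fst - w.fst)| ≤ η := by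
    have := (WithLp.norm_fst_le _ (a₂ + A (z - w))).trans ha₂
    rwa [hA] at this
  have hd₁ : ‖a₁.snd - e⁻¹ • (z.snd - w.snd)‖ ≤ η := by
    have := (WithLp.norm_snd_le _ (a₁ - A (z - w))).trans ha₁
    rwa [hA] at this
  have hd₂ : ‖a₂.snd + e⁻¹ • (z.snd - w.snd)‖ ≤ η := by
    have := (WithLp.norm_snd_le _ (a₂ + A (z - w))).trans ha₂
    rwa [hA] at this
  refine ⟨z, hz, w, hw, a₁, a₂, B₁, B₂, by linarith, by linarith, by linarith, hj₁, hj₂, ?_, hd₁,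
    ?_, fun h k => (hB _ _).trans (le_of_eq ?_)⟩
  · have := abs_add_le (a₁.fst - δ⁻¹ * (z.fst - w.fst)) (a₂.fst + δ⁻¹ * (z.fst - w.fst))
    rw [show a₁.fst - δ⁻¹ * (z.fst - w.fst) + (a₂.fst + δ⁻¹ * (z.fst - w.fst)) =
      a₁.fst + a₂.fst by ring] at this
    linarith
  · rw [← norm_neg, neg_sub, sub_neg_eq_add, add_comm]
    exact hd₂
  · rw [hAq]
    simp

/-- Uniform continuity in time of the coefficients on bounded sets. -/
lemma IsaacsData.exists_time_modulus [CompactSpace U] [CompactSpace V]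
    (h : IsaacsData T K b σ f) (R Z : ℝ) {γ : ℝ} (hγ : 0 < γ) :
    ∃ ρ > 0, ∀ t ∈ Set.Icc (0 : ℝ) T, ∀ s ∈ Set.Icc (0 : ℝ) T, |t - s| < ρ →
      ∀ x : Eucl n, ‖x‖ ≤ R → (∀ u v, ‖b t x u v - b s x u v‖ ≤ γ) ∧
        (∀ u v, ‖σ t x u v - σ s x u v‖ ≤ γ) ∧
        ∀ z : Eucl d, ‖z‖ ≤ Z → ∀ u v, |f t x 0 z u v - f s x 0 z u v| ≤ γ := by
  obtain ⟨ρ₁, hρ₁, h₁⟩ := _root_.exists_time_modulus (T := T) (C := K)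
    (F := fun (x : Eucl n) (q : ℝ × U × V) => b q.1 x q.2.1 q.2.2) (S := Metric.closedBall 0 R)
    h.b_cont (fun t ht x x' u v => by simpa only [dist_eq_norm] using h.b_lip t ht x x' u v)
    (isCompact_closedBall _ _) hγ
  obtain ⟨ρ₂, hρ₂, h₂⟩ := _root_.exists_time_modulus (T := T) (C := K)
    (F := fun (x : Eucl n) (q : ℝ × U × V) => σ q.1 x q.2.1 q.2.2) (S := Metric.closedBall 0 R)
    h.σ_cont (fun t ht x x' u v => by simpa only [dist_eq_norm] using h.σ_lip t ht x x' u v)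
    (isCompact_closedBall _ _) hγ
  obtain ⟨ρ₃, hρ₃, h₃⟩ := _root_.exists_time_modulus (T := T) (C := 2 * K)
    (F := fun (p : Eucl n × Eucl d) (q : ℝ × U × V) => f q.1 p.1 0 p.2 q.2.1 q.2.2)
    (S := Metric.closedBall 0 R ×ˢ Metric.closedBall 0 Z)
    (fun p => h.f_cont p.1 0 p.2) (fun t ht p p' u v => by
      have h1 := h.f_lip t ht p.1 p'.1 0 0 p.2 p'.2 u v
      rw [sub_self, abs_zero, add_zero] at h1
      have h2 : ‖p.1 - p'.1‖ ≤ dist p p' := by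
        rw [← dist_eq_norm]; exact le_max_left _ _
      have h3 : ‖p.2 - p'.2‖ ≤ dist p p' := by
        rw [← dist_eq_norm]; exact le_max_right _ _
      rw [Real.dist_eq]
      nlinarith [h.pos])
    ((isCompact_closedBall _ _).prod (isCompact_closedBall _ _)) hγ
  refine ⟨min ρ₁ (min ρ₂ ρ₃), by positivity, fun t ht s hs hts x hx => ⟨fun u v => ?_,
    fun u v => ?_, fun z hz u v => ?_⟩⟩
  · rw [← dist_eq_norm]
    exact (h₁ x (by simpa using hx) t ht s hs (hts.trans_le (min_le_left _ _)) u v).le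
  · rw [← dist_eq_norm]
    exact (h₂ x (by simpa using hx) t ht s hs
      (hts.trans_le ((min_le_right _ _).trans (min_le_left _ _))) u v).le
  · rw [← Real.dist_eq]
    exact (h₃ (x, z) ⟨by simpa using hx, by simpa using hz⟩ t ht s hs
      (hts.trans_le ((min_le_right _ _).trans (min_le_right _ _))) u v).le

end Localization

section CylinderComparison

open Filter Topology

variable {n d : ℕ} {U V : Type*} [MetricSpace U] [CompactSpace U] [Nonempty U]
  [MetricSpace V] [CompactSpace V] [Nonempty V]
  {T K : ℝ} {b : ℝ → Eucl n → U → V → Eucl n}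
  {σ : ℝ → Eucl n → U → V → Matrix (Fin n) (Fin d) ℝ}
  {f : ℝ → Eucl n → ℝ → Eucl d → U → V → ℝ} {Φ : Eucl n → ℝ} {u₁ u₂ : ℝ → Eucl n → ℝ}

/-- The closed cylinder `[a, b] × {|x| ≤ R}` in the Euclidean product. -/
def cylinder (n : ℕ) (a b R : ℝ) : Set (WithLp 2 (ℝ × Eucl n)) :=
  {z | z.fst ∈ Set.Icc a b ∧ ‖z.snd‖ ≤ R}

lemma isCompact_cylinder (n : ℕ) (a b R : ℝ) : IsCompact (cylinder n a b R) := by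
  have h1 : IsCompact (Set.Icc a b ×ˢ Metric.closedBall (0 : Eucl n) R) :=
    isCompact_Icc.prod (isCompact_closedBall _ _)
  convert h1.image (WithLp.prod_continuous_toLp 2 ℝ (Eucl n)) using 1
  ext z
  constructor
  · rintro ⟨h2, h3⟩
    exact ⟨(z.fst, z.snd), ⟨h2, by simpa using h3⟩, rfl⟩
  · rintro ⟨p, ⟨h2, h3⟩, rfl⟩
    exact ⟨h2, by simpa using h3⟩

lemma cylinder_mem_nhds {a b R : ℝ} {z : WithLp 2 (ℝ × Eucl n)} (h : z.fst ∈ Set.Ioo a b)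
    (h' : ‖z.snd‖ < R) : cylinder n a b R ∈ 𝓝 z := by
  have h1 : Continuous fun z : WithLp 2 (ℝ × Eucl n) => z.fst := by fun_prop
  have h2 : Continuous fun z : WithLp 2 (ℝ × Eucl n) => ‖z.snd‖ := by fun_prop
  filter_upwards [h1.continuousAt.eventually (Ioo_mem_nhds h.1 h.2),
    h2.continuousAt.eventually (Iio_mem_nhds h')] with y hy hy'
  exact ⟨⟨hy.1.le, hy.2.le⟩, le_of_lt hy'⟩

/-- Arithmetic of the penalization error terms. -/
lemma penalization_error_le {K X e γ κ η Γ : ℝ} (hK : 0 < K) (hX : 0 ≤ X) (he : 0 < e)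
    (hγ : 0 ≤ γ) (hκ : X ^ 2 / e ≤ κ) (hγe : γ ≤ e) (heκ : e ≤ κ)
    (hηκ : η * (3 + Γ ^ 2 + 2 * (1 + K) * Γ) ≤ κ) :
    2 * η + ((γ + K * X) ^ 2 / (2 * e) + η * Γ ^ 2 + (1 + K) * (X / e * (γ + K * X))
      + 2 * η * (1 + K) * Γ + γ + K * X + η) ≤ κ * (6 + 5 * K + 2 * K ^ 2) := by
  have hκ0 : 0 ≤ κ := by linarith
  have hX2 : X ^ 2 ≤ κ * e := (div_le_iff₀ he).mp hκ
  have hXκ : X ≤ κ := by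
    refine le_of_sq_le_sq ?_ hκ0
    nlinarith
  have h1 : γ ^ 2 / e ≤ κ := by rw [div_le_iff₀ he]; nlinarith
  have h2 : (γ + K * X) ^ 2 / (2 * e) ≤ γ ^ 2 / e + K ^ 2 * (X ^ 2 / e) := by
    rw [div_le_iff₀ (by positivity)]
    have : (γ ^ 2 / e + K ^ 2 * (X ^ 2 / e)) * (2 * e) = 2 * γ ^ 2 + 2 * (K * X) ^ 2 := by
      field_simp
    rw [this]
    nlinarith [sq_nonneg (γ - K * X)]
  have h3 : X / e * (γ + K * X) ≤ X + K * (X ^ 2 / e) := by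
    have : X / e * γ ≤ X := by
      rw [div_mul_eq_mul_div, div_le_iff₀ he]; gcongr
    have e1 : X / e * (γ + K * X) = X / e * γ + K * (X ^ 2 / e) := by ring
    linarith
  have h4 : K ^ 2 * (X ^ 2 / e) ≤ K ^ 2 * κ := by gcongr
  have h5 : K * (X ^ 2 / e) ≤ K * κ := by gcongr
  have h6 : (1 + K) * (X / e * (γ + K * X)) ≤ (1 + K) * (κ + K * κ) := by
    gcongr; linarith
  have h7 : K * X ≤ K * κ := by gcongr
  nlinarith

set_option maxHeartbeats 1000000 in
/-- Maximum principle on a cylinder for the difference of two solutions minus the barrier. -/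
lemma IsaacsData.comparison_cylinder (h : IsaacsData T K b σ f)
    (hc₁ : ContinuousOn (fun p : ℝ × Eucl n => u₁ p.1 p.2) (Set.Icc 0 T ×ˢ Set.univ))
    (hc₂ : ContinuousOn (fun p : ℝ × Eucl n => u₂ p.1 p.2) (Set.Icc 0 T ×ˢ Set.univ))
    (h₁ : IsViscositySubsolution T (lowerHamiltonian b σ f) Φ u₁)
    (h₂ : IsViscositySupersolution T (lowerHamiltonian b σ f) Φ u₂) {a a' t₁ R α : ℝ}
    (ha : 0 ≤ a) (haa' : a < a') (ht₁ : t₁ ≤ T)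
    (hμ : (10 * K ^ 2 + 4 * K + 1) * (t₁ - a) ≤ 1) (hα : 0 < α)
    (hbd : ∀ t ∈ Set.Icc a' t₁, ∀ x : Eucl n, ‖x‖ ≤ R → (t = a' ∨ t = t₁ ∨ ‖x‖ = R) →
      u₁ t x - α * barrier (10 * K ^ 2 + 4 * K + 1) a t x - u₂ t x ≤ 0)
    {t : ℝ} (ht : t ∈ Set.Icc a' t₁) {x : Eucl n} (hx : ‖x‖ ≤ R) :
    u₁ t x - α * barrier (10 * K ^ 2 + 4 * K + 1) a t x - u₂ t x ≤ 0 := by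
  by_contra! hpos
  have hK := h.pos
  set c := 10 * K ^ 2 + 4 * K + 1 with hc
  have hc0 : 0 < c := by positivity
  have hR : 0 ≤ R := (norm_nonneg x).trans hx
  set S := cylinder n a' t₁ R with hS
  have hST : ∀ z ∈ S, (z.fst, z.snd) ∈ Set.Icc 0 T ×ˢ (Set.univ : Set (Eucl n)) := fun z hz =>
    ⟨⟨by linarith [hz.1.1], hz.1.2.trans ht₁⟩, trivial⟩
  have hofLp : Continuous fun z : WithLp 2 (ℝ × Eucl n) => (z.fst, z.snd) := by fun_prop
  have hw₁ : ContinuousOn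
      (fun z : WithLp 2 (ℝ × Eucl n) => u₁ z.fst z.snd - α * barrier c a z.fst z.snd) S := by
    refine (hc₁.comp hofLp.continuousOn hST).sub (continuousOn_const.mul fun z hz => ?_)
    exact ((contDiffAt_barrier hc0 (haa'.trans_le hz.1.1) z.snd).continuousAt.comp
      (f := fun z : WithLp 2 (ℝ × Eucl n) => (z.fst, z.snd))
      hofLp.continuousAt).continuousWithinAt
  have hw₂ : ContinuousOn (fun z : WithLp 2 (ℝ × Eucl n) => -u₂ z.fst z.snd - 0) S :=
    (hc₂.comp hofLp.continuousOn hST).neg.sub continuousOn_const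
  set Γ := K * (1 + R) with hΓ
  have hΓ0 : 0 ≤ Γ := by positivity
  set κ := α / (2 * (6 + 5 * K + 2 * K ^ 2)) with hκ
  have hκ0 : 0 < κ := by positivity
  obtain ⟨r, hr, hdoub⟩ := exists_localized_doubling (isCompact_cylinder n a' t₁ R) hw₁ hw₂
    (z₀ := WithLp.toLp 2 (t, x)) ⟨ht, hx⟩ (by simpa [sub_eq_add_neg] using hpos) hκ0
  set e := min r κ with he
  have he0 : 0 < e := lt_min hr hκ0
  obtain ⟨ρ, hρ, hmod⟩ := h.exists_time_modulus R (2 * R / e * Γ) he0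
  set δ := min r (ρ ^ 2 / (2 * κ)) with hδ
  have hδ0 : 0 < δ := lt_min hr (by positivity)
  set η := min r (κ / (3 + Γ ^ 2 + 2 * (1 + K) * Γ)) with hη
  have hη0 : 0 < η := lt_min hr (by positivity)
  obtain ⟨z, hz, w, hw, a₁, a₂, B₁, B₂, hgz, hgw, hQ, hj₁, hj₂, hat, hax₁, hax₂, hB⟩ :=
    hdoub e δ η he0 hδ0 hη0 (min_le_left _ _) (min_le_left _ _) (min_le_left _ _)
  have hint : ∀ y ∈ S, 0 < u₁ y.fst y.snd - α * barrier c a y.fst y.snd + (-u₂ y.fst y.snd - 0) →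
      y.fst ∈ Set.Ioo a' t₁ ∧ ‖y.snd‖ < R := by
    intro y hy hy0
    have h1 := hbd y.fst hy.1 y.snd hy.2
    have h2 : ¬ (y.fst = a' ∨ y.fst = t₁ ∨ ‖y.snd‖ = R) := fun h3 => by linarith [h1 h3]
    push Not at h2
    exact ⟨⟨lt_of_le_of_ne hy.1.1 (Ne.symm h2.1), lt_of_le_of_ne hy.1.2 h2.2.1⟩,
      lt_of_le_of_ne hy.2 h2.2.2⟩
  obtain ⟨hzt, hzx⟩ := hint z hz hgz
  obtain ⟨hwt, hwx⟩ := hint w hw hgw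
  have hzT : z.fst ∈ Set.Ico 0 T := ⟨by linarith [hzt.1], hzt.2.trans_le ht₁⟩
  have hwT : w.fst ∈ Set.Ico 0 T := ⟨by linarith [hwt.1], hwt.2.trans_le ht₁⟩
  have hza : a < z.fst := haa'.trans hzt.1
  obtain ⟨τ, D, M, hτ, hD, hM, hbar⟩ := h.exists_barrier_derivatives ⟨hzT.1, hzT.2.le⟩ hza
    ((mul_le_mul_of_nonneg_left (by linarith [hzt.2]) hc0.le).trans hμ) hα z.snd
  obtain ⟨N₁, hN₁, hle₁⟩ := h₁.exists_le_of_hasUpperJet hzT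
    (χ := fun t x => α * barrier c a t x)
    (contDiffAt_const.mul (contDiffAt_barrier hc0 hza z.snd)) hτ hD hM
    (cylinder_mem_nhds hzt hzx) hj₁ hη0
  obtain ⟨N₂, hN₂, hle₂⟩ := h₂.neg.exists_le_of_hasUpperJet hwT (χ := fun _ _ => 0)
    contDiffAt_const (hasDerivAt_const _ _) (D := fun _ => 0)
    (fun y => hasGradientAt_const _ _) (hasFDerivAt_const _ _)
    (cylinder_mem_nhds hwt hwx) hj₂ hη0
  set X := ‖z.snd - w.snd‖ with hX
  have hQ1 : 0 ≤ (z.fst - w.fst) ^ 2 / δ := by positivity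
  have hQ2 : 0 ≤ X ^ 2 / e := by positivity
  have hts : |z.fst - w.fst| < ρ := by
    refine abs_lt_of_sq_lt_sq ?_ hρ.le
    have h1 : (z.fst - w.fst) ^ 2 ≤ κ * δ := (div_le_iff₀ hδ0).mp (by linarith)
    have h2 : κ * δ ≤ κ * (ρ ^ 2 / (2 * κ)) := by gcongr; exact min_le_right _ _
    have h3 : κ * (ρ ^ 2 / (2 * κ)) = ρ ^ 2 / 2 := by field_simp
    nlinarith
  have hX2R : X ≤ 2 * R := (norm_sub_le _ _).trans (by linarith [hz.2, hw.2])
  obtain ⟨hmb, hmσ, hmf⟩ := hmod z.fst ⟨hzT.1, hzT.2.le⟩ w.fst ⟨hwT.1, hwT.2.le⟩ hts z.snd hz.2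
  have hham := h.hamiltonian_sub_le (p := e⁻¹ • (z.snd - w.snd))
    (q := a₁.snd - e⁻¹ • (z.snd - w.snd)) (q' := -a₂.snd - e⁻¹ • (z.snd - w.snd))
    (D := D z.snd) (M := M) (N₁ := N₁) (N₂ := N₂) (e := e)
    ⟨hzT.1, hzT.2.le⟩ ⟨hwT.1, hwT.2.le⟩ hz.2 hw.2 hη0 he0
    (by rw [norm_smul, norm_inv, Real.norm_of_nonneg he0.le, inv_mul_eq_div]) hax₁ hax₂
    (fun s k => by
      rw [hN₁, hN₂]
      linarith [hB s k]) hbar hmb hmσ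
    (fun y hy => hmf y (hy.trans (by gcongr)))
  rw [add_sub_cancel, add_sub_cancel] at hham
  simp only [zero_add, neg_zero] at hle₂
  have herr := penalization_error_le (η := η) (Γ := Γ) hK (norm_nonneg (z.snd - w.snd)) he0 he0.le
    (by linarith) le_rfl (min_le_right _ _) (by
      rw [← le_div_iff₀ (by positivity)]; exact min_le_right _ _)
  have hκα : κ * (6 + 5 * K + 2 * K ^ 2) = α / 2 := by rw [hκ]; field_simp
  rw [hκα] at herr
  have hat' := (abs_le.mp hat).2
  linarith

end CylinderComparison

section Comparison

open Filter Topology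

/-- A growth bound of the form `o(exp(A (log √(1 + |x|²))²))`, uniformly in time. -/
def HasLogGrowth {n : ℕ} (T A : ℝ) (w : ℝ → Eucl n → ℝ) : Prop :=
  ∀ ε > (0 : ℝ), ∃ R : ℝ, ∀ t ∈ Set.Icc (0 : ℝ) T, ∀ x : Eucl n, R ≤ ‖x‖ →
    |w t x| ≤ ε * Real.exp (A * Real.log ((‖x‖ ^ 2 + 1) ^ ((1 : ℝ) / 2)) ^ 2)

lemma MemTheta.exists_hasLogGrowth {n : ℕ} {T : ℝ} {w : ℝ → Eucl n → ℝ} (h : MemTheta T w) :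
    ∃ A₀, 0 < A₀ ∧ ∀ A, A₀ ≤ A → HasLogGrowth T A w := by
  obtain ⟨A₀, hA₀, hg⟩ := h.2
  refine ⟨A₀, hA₀, fun A hA ε hε => ?_⟩
  obtain ⟨R, hR⟩ := hg ε hε
  refine ⟨R, fun t ht x hx => ?_⟩
  have h1 := hR t ht x hx
  rw [neg_mul, Real.exp_neg, ← div_eq_mul_inv, div_le_iff₀ (Real.exp_pos _)] at h1
  refine h1.trans ?_
  gcongr

variable {n d : ℕ} {U V : Type*} [MetricSpace U] [CompactSpace U] [Nonempty U]
  [MetricSpace V] [CompactSpace V] [Nonempty V]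
  {T K : ℝ} {b : ℝ → Eucl n → U → V → Eucl n}
  {σ : ℝ → Eucl n → U → V → Matrix (Fin n) (Fin d) ℝ}
  {f : ℝ → Eucl n → ℝ → Eucl d → U → V → ℝ} {Φ : Eucl n → ℝ} {u₁ u₂ : ℝ → Eucl n → ℝ}

/-- Comparison on a short time interval. -/
lemma IsaacsData.comparison_Ioc (h : IsaacsData T K b σ f)
    (hc₁ : ContinuousOn (fun p : ℝ × Eucl n => u₁ p.1 p.2) (Set.Icc 0 T ×ˢ Set.univ))
    (hc₂ : ContinuousOn (fun p : ℝ × Eucl n => u₂ p.1 p.2) (Set.Icc 0 T ×ˢ Set.univ))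
    (h₁ : IsViscositySubsolution T (lowerHamiltonian b σ f) Φ u₁)
    (h₂ : IsViscositySupersolution T (lowerHamiltonian b σ f) Φ u₂) {A : ℝ} (hA : 0 ≤ A)
    (hg₁ : HasLogGrowth T A u₁) (hg₂ : HasLogGrowth T A u₂) {a t₁ : ℝ} (ha : 0 ≤ a)
    (ht₁ : t₁ ≤ T) (hμ : (10 * K ^ 2 + 4 * K + 1) * (t₁ - a) * (A + 1) ≤ 1)
    (hle : ∀ x, u₁ t₁ x ≤ u₂ t₁ x) {t : ℝ} (ht : t ∈ Set.Ioc a t₁) (x : Eucl n) :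
    u₁ t x ≤ u₂ t x := by
  by_contra! hlt
  have hK := h.pos
  set c := 10 * K ^ 2 + 4 * K + 1 with hc
  have hc0 : 0 < c := by positivity
  have hat : a < t₁ := ht.1.trans_le ht.2
  have hcpos : 0 < c * (t₁ - a) := mul_pos hc0 (sub_pos.mpr hat)
  have hB : 0 < barrier c a t x := Real.exp_pos _
  set α := (u₁ t x - u₂ t x) / (2 * barrier c a t x) with hα
  have hα0 : 0 < α := div_pos (sub_pos.mpr hlt) (by positivity)
  obtain ⟨R₁, hR₁⟩ := hg₁ (α / 2) (by positivity)
  obtain ⟨R₂, hR₂⟩ := hg₂ (α / 2) (by positivity)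
  set R := max (max R₁ R₂) ‖x‖ with hR
  have hcomp : IsCompact (Set.Icc 0 T ×ˢ Metric.closedBall (0 : Eucl n) R) :=
    isCompact_Icc.prod (isCompact_closedBall _ _)
  obtain ⟨N, hN⟩ := hcomp.exists_bound_of_continuousOn
    ((hc₁.sub hc₂).mono (Set.prod_mono subset_rfl (Set.subset_univ _)))
  set a' := a + min (t - a) (α / (c * (|N| + 1))) with ha'
  have haa' : a < a' := by
    have : 0 < min (t - a) (α / (c * (|N| + 1))) :=
      lt_min (sub_pos.mpr ht.1) (by positivity)
    linarith
  have ha't : a' ≤ t := by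
    have := min_le_left (t - a) (α / (c * (|N| + 1)))
    linarith
  have hfin := h.comparison_cylinder hc₁ hc₂ h₁ h₂ (R := R) ha haa' ht₁ (by nlinarith) hα0
    (fun s hs y hy hsy => by
      have has : a < s := haa'.trans_le hs.1
      have hs0 : s ∈ Set.Icc 0 T := ⟨by linarith, hs.2.trans ht₁⟩
      have hcs : 0 < c * (s - a) := mul_pos hc0 (sub_pos.mpr has)
      rcases hsy with rfl | rfl | hyR
      · have h3 : |u₁ a' y - u₂ a' y| ≤ N := hN (a', y) ⟨hs0, by simpa using hy⟩
        have h4 := inv_le_barrier (inv_nonneg.mpr hcs.le) y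
        have h5 : (|N| + 1) ≤ α * (c * (a' - a))⁻¹ := by
          rw [← div_eq_mul_inv, le_div_iff₀ hcs]
          have h6 : a' - a ≤ α / (c * (|N| + 1)) := by
            have := min_le_right (t - a) (α / (c * (|N| + 1)))
            linarith
          rw [le_div_iff₀ (by positivity)] at h6
          linarith
        have h7 := mul_le_mul_of_nonneg_left h4 hα0.le
        linarith [le_abs_self (u₁ a' y - u₂ a' y), le_abs_self N]
      · have h4 : 0 ≤ α * barrier c a s y := mul_nonneg hα0.le (Real.exp_pos _).le
        linarith [hle y]
      · have h3 := hR₁ s hs0 y (by rw [hyR]; exact (le_max_left _ _).trans (le_max_left _ _))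
        have h4 := hR₂ s hs0 y (by rw [hyR]; exact (le_max_right _ _).trans (le_max_left _ _))
        have h5 : A ≤ (c * (s - a))⁻¹ := by
          rw [← one_div, le_div_iff₀ hcs]
          have h6 : c * (s - a) ≤ c * (t₁ - a) := by gcongr; exact hs.2
          nlinarith
        have h6 := mul_le_mul_of_nonneg_left (exp_le_barrier h5 hA y) hα0.le
        linarith [le_abs_self (u₁ s y), neg_abs_le (u₂ s y)])
    ⟨ha't, ht.2⟩ (le_max_right _ _)
  have hhalf : α * barrier c a t x = (u₁ t x - u₂ t x) / 2 := by
    rw [hα]; field_simp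
  linarith

/-- Comparison principle: subsolutions lie below supersolutions. -/
lemma IsaacsData.comparison (h : IsaacsData T K b σ f)
    (hΘ₁ : MemTheta T u₁) (hΘ₂ : MemTheta T u₂)
    (h₁ : IsViscositySubsolution T (lowerHamiltonian b σ f) Φ u₁)
    (h₂ : IsViscositySupersolution T (lowerHamiltonian b σ f) Φ u₂) (hT : 0 < T) {t : ℝ}
    (ht : t ∈ Set.Icc 0 T) (x : Eucl n) : u₁ t x ≤ u₂ t x := by
  have hK := h.pos
  obtain ⟨A₁, hA₁, hg₁⟩ := hΘ₁.exists_hasLogGrowth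
  obtain ⟨A₂, hA₂, hg₂⟩ := hΘ₂.exists_hasLogGrowth
  set A := A₁ + A₂ with hA
  set c := 10 * K ^ 2 + 4 * K + 1 with hc
  have hc0 : 0 < c := by positivity
  set τ := 1 / (2 * c * (A + 1)) with hτ
  have hA0 : 0 ≤ A := by positivity
  have hτ0 : 0 < τ := by positivity
  have hτ1 : c * (2 * τ) * (A + 1) = 1 := by rw [hτ]; field_simp
  have hstep : ∀ k : ℕ, ∀ t ∈ Set.Ioc 0 T, T - k * τ ≤ t → ∀ x, u₁ t x ≤ u₂ t x := by
    intro k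
    induction k with
    | zero =>
      intro t ht htk x
      have htT : t = T := le_antisymm ht.2 (by simpa using htk)
      rw [htT]
      exact (h₁.1 x).trans (h₂.1 x)
    | succ k ih =>
      intro t ht htk x
      push_cast at htk
      by_cases htk' : T - k * τ ≤ t
      · exact ih t ht htk' x
      push Not at htk'
      have hk0 : 0 ≤ (k : ℝ) * τ := by positivity
      have hlen : T - k * τ - max (T - k * τ - 2 * τ) 0 ≤ 2 * τ := by
        linarith [le_max_left (T - k * τ - 2 * τ) 0]
      refine h.comparison_Ioc hΘ₁.1 hΘ₂.1 h₁ h₂ hA0 (hg₁ A (by linarith)) (hg₂ A (by linarith))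
        (a := max (T - k * τ - 2 * τ) 0) (t₁ := T - k * τ) (le_max_right _ _) (by linarith) ?_
        (ih (T - k * τ) ⟨ht.1.trans htk', by linarith⟩ le_rfl)
        ⟨max_lt (by linarith) ht.1, htk'.le⟩ x
      exact (mul_le_mul_of_nonneg_right (mul_le_mul_of_nonneg_left hlen hc0.le)
        (by positivity)).trans_eq hτ1
  have hIoc : ∀ t ∈ Set.Ioc 0 T, u₁ t x ≤ u₂ t x := by
    intro t ht
    obtain ⟨k, hk⟩ := exists_nat_ge (T / τ)
    rw [div_le_iff₀ hτ0] at hk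
    exact hstep k t ht (by linarith [ht.1]) x
  have hmap : Continuous fun s : ℝ => (s, x) := by fun_prop
  have hsub : ∀ w : ℝ → Eucl n → ℝ, MemTheta T w →
      ContinuousWithinAt (fun s => w s x) (Set.Ioc 0 T) t := fun w hw =>
    ((hw.1.comp hmap.continuousOn fun s hs => ⟨hs, trivial⟩) t ht).mono Set.Ioc_subset_Icc_self
  exact ContinuousWithinAt.closure_le (f := fun s => u₁ s x) (g := fun s => u₂ s x)
    (by rwa [closure_Ioc hT.ne]) (hsub u₁ hΘ₁) (hsub u₂ hΘ₂) hIoc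

end Comparison

/-- **Theorem 6.1 (uniqueness).** Two viscosity solutions in `Θ` of the lower Isaacs
equation coincide on `[0,T]×ℝⁿ`. -/
theorem uniqueness_viscosity_isaacs_lower
    {n d : ℕ} (hn : 1 ≤ n) (hd : 1 ≤ d) {T : ℝ} (hT : 0 < T)
    {U V : Type*} [MetricSpace U] [CompactSpace U] [Nonempty U]
    [MetricSpace V] [CompactSpace V] [Nonempty V]
    (b : ℝ → Eucl n → U → V → Eucl n)
    (σ : ℝ → Eucl n → U → V → Matrix (Fin n) (Fin d) ℝ)
    (f : ℝ → Eucl n → ℝ → Eucl d → U → V → ℝ)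
    (Φ : Eucl n → ℝ)
    -- (H4.1)(i): for fixed `x`, `b(·,x,·,·)` and `σ(·,x,·,·)` are continuous in `(t,u,v)`
    (hb_cont : ∀ x : Eucl n, ContinuousOn
      (fun q : ℝ × U × V => b q.1 x q.2.1 q.2.2)
      (Set.Icc (0 : ℝ) T ×ˢ (Set.univ : Set (U × V))))
    (hσ_cont : ∀ x : Eucl n, ContinuousOn
      (fun q : ℝ × U × V => σ q.1 x q.2.1 q.2.2)
      (Set.Icc (0 : ℝ) T ×ˢ (Set.univ : Set (U × V))))
    -- (H4.1)(ii): `b` and `σ` are Lipschitz in `x`, uniformly in `(t,u,v)`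
    (hbσ_lip : ∃ C > (0 : ℝ), ∀ t ∈ Set.Icc (0 : ℝ) T, ∀ (x x' : Eucl n) (u : U) (v : V),
      ‖b t x u v - b t x' u v‖ + ‖σ t x u v - σ t x' u v‖ ≤ C * ‖x - x'‖)
    -- (H4.2)(i): for fixed `(x,y,z)`, `f(·,x,y,z,·,·)` is continuous in `(t,u,v)`
    (hf_cont : ∀ (x : Eucl n) (y : ℝ) (z : Eucl d), ContinuousOn
      (fun q : ℝ × U × V => f q.1 x y z q.2.1 q.2.2)
      (Set.Icc (0 : ℝ) T ×ˢ (Set.univ : Set (U × V))))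
    -- (H4.2): `f` is Lipschitz in `(x,y,z)`, uniformly in `(t,u,v)`
    (hf_lip : ∃ C > (0 : ℝ), ∀ t ∈ Set.Icc (0 : ℝ) T,
      ∀ (x x' : Eucl n) (y y' : ℝ) (z z' : Eucl d) (u : U) (v : V),
      |f t x y z u v - f t x' y' z' u v| ≤ C * (‖x - x'‖ + |y - y'| + ‖z - z'‖))
    -- (H4.2): `Φ` is Lipschitz
    (hΦ_lip : ∃ C > (0 : ℝ), ∀ x x' : Eucl n, |Φ x - Φ x'| ≤ C * ‖x - x'‖)
    (u₁ u₂ : ℝ → Eucl n → ℝ)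
    (hu₁Θ : MemTheta T u₁) (hu₂Θ : MemTheta T u₂)
    (hsol₁ : IsViscositySolution T (lowerHamiltonian b σ f) Φ u₁)
    (hsol₂ : IsViscositySolution T (lowerHamiltonian b σ f) Φ u₂) :
    ∀ t ∈ Set.Icc (0 : ℝ) T, ∀ x : Eucl n, u₁ t x = u₂ t x := by
  obtain ⟨K, h⟩ := exists_isaacsData hb_cont hσ_cont hbσ_lip hf_cont hf_lip
  exact fun t ht x => le_antisymm (h.comparison hu₁Θ hu₂Θ hsol₁.1 hsol₂.2 hT ht x)
    (h.comparison hu₂Θ hu₁Θ hsol₂.1 hsol₁.2 hT ht x)
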